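/- arXiv:2111.11963 — 11 statements merged into one kernel-verified Lean document; each statement's English description precedes it below -/
import Mathlib

section
/- For every single-period reservation problem there exists a finitely supported probability distribution over period-1 reservation tables Z such that: (i) almost surely every internal entry satisfies Z_{ij} ∈ {⌊α_j q_i⌋, ⌈α_j q_i⌉} and every column total satisfies ∑_{i∈D} Z_{ij} ∈ {⌊α_j ∑_{i∈D} q_i⌋, ⌈α_j ∑_{i∈D} q_i⌉} (the lottery stays within quota); and (ii) E[Z_{ij}] = α_j q_i for every department i and category j (the lottery is unbiased). -/
open Finset

theorem two_mul_card_image_le_card {α β : Type*} [DecidableEq β] {s : Finset α} {f : α → β}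
    (h : ∀ x ∈ s, ∃ y ∈ s, y ≠ x ∧ f y = f x) : 2 * #(s.image f) ≤ #s := by
  refine mul_card_image_le_card_of_maps_to (fun x hx => mem_image_of_mem f hx) 2 fun b hb => ?_
  obtain ⟨x, hx, rfl⟩ := mem_image.1 hb
  obtain ⟨y, hy, hne, hxy⟩ := h x hx
  exact one_lt_card.2 ⟨y, by simp [hy, hxy], x, by simp [hx], hne⟩

/-- A set of cells of a table in which every nonempty line has at least two cells supports a nonzero
real table all of whose row sums and column sums vanish. -/
theorem exists_ne_zero_sum_eq_zero_of_lines_nontrivial {R C : Type*} [Fintype R] [Fintype C]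
    (F : Finset (R × C)) (hF : F.Nonempty)
    (hrow : ∀ i j, (i, j) ∈ F → ∃ j', j' ≠ j ∧ (i, j') ∈ F)
    (hcol : ∀ i j, (i, j) ∈ F → ∃ i', i' ≠ i ∧ (i', j) ∈ F) :
    ∃ E : R → C → ℝ, E ≠ 0 ∧ (∀ i j, (i, j) ∉ F → E i j = 0) ∧
      (∀ i, ∑ j, E i j = 0) ∧ (∀ j, ∑ i, E i j = 0) := by
  classical
  set A := F.image Prod.fst
  set B := F.image Prod.snd
  obtain ⟨⟨i₀, j₀⟩, h₀⟩ := hF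
  have hj₀ : j₀ ∈ B := mem_image_of_mem Prod.snd h₀
  have hcardA : 2 * #A ≤ #F := two_mul_card_image_le_card fun x hx =>
    let ⟨j', hne, hmem⟩ := hrow x.1 x.2 hx
    ⟨(x.1, j'), hmem, fun h => hne (congrArg Prod.snd h), rfl⟩
  have hcardB : 2 * #B ≤ #F := two_mul_card_image_le_card fun x hx =>
    let ⟨i', hne, hmem⟩ := hcol x.1 x.2 hx
    ⟨(i', x.2), hmem, fun h => hne (congrArg Prod.fst h), rfl⟩
  let T : (F → ℝ) →ₗ[ℝ] (R → C → ℝ) :=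
    { toFun := fun v i j => if h : (i, j) ∈ F then v ⟨(i, j), h⟩ else 0
      map_add' := fun v w => by ext i j; by_cases h : (i, j) ∈ F <;> simp [h]
      map_smul' := fun c v => by ext i j; by_cases h : (i, j) ∈ F <;> simp [h] }
  let L : (F → ℝ) →ₗ[ℝ] (A → ℝ) × (B.erase j₀ → ℝ) :=
    { toFun := fun v => (fun i => ∑ j, T v i j, fun j => ∑ i, T v i j)
      map_add' := fun v w => by ext <;> simp [sum_add_distrib]
      map_smul' := fun c v => by ext <;> simp [mul_sum] }
  have hlt : Module.finrank ℝ ((A → ℝ) × (B.erase j₀ → ℝ)) < Module.finrank ℝ (F → ℝ) := by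
    have := card_pos.2 ⟨j₀, hj₀⟩
    simp only [Module.finrank_prod, Module.finrank_fintype_fun_eq_card, Fintype.card_coe,
      card_erase_of_mem hj₀]
    omega
  obtain ⟨v, hv, hv0⟩ := (Submodule.ne_bot_iff _).1 (LinearMap.ker_ne_bot_of_finrank_lt hlt (f := L))
  have hT : ∀ i j, (i, j) ∉ F → T v i j = 0 := fun i j h => by simp [T, h]
  have hLv : L v = 0 := hv
  have hrow0 : ∀ i, ∑ j, T v i j = 0 := by
    intro i
    by_cases hi : i ∈ A
    · exact congrFun (congrArg Prod.fst hLv) ⟨i, hi⟩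
    · exact sum_eq_zero fun j _ => hT i j fun h => hi (mem_image_of_mem Prod.fst h)
  have hcol0 : ∀ j, j ≠ j₀ → ∑ i, T v i j = 0 := by
    intro j hj
    by_cases hjB : j ∈ B
    · exact congrFun (congrArg Prod.snd hLv) ⟨j, mem_erase.2 ⟨hj, hjB⟩⟩
    · exact sum_eq_zero fun i _ => hT i j fun h => hjB (mem_image_of_mem Prod.snd h)
  refine ⟨T v, fun h => hv0 ?_, hT, hrow0, fun j => ?_⟩
  · ext ⟨⟨i, j⟩, hij⟩
    simpa [T, hij] using congrFun (congrFun h i) j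
  · by_cases hj : j = j₀
    · subst hj
      rw [← Fintype.sum_eq_single (f := fun j => ∑ i, T v i j) _ hcol0, sum_comm]
      exact sum_eq_zero fun i _ => hrow0 i
    · exact hcol0 j hj

/-- A finite family of reals with integer sum cannot have exactly one non-integer member. -/
theorem exists_ne_notMem_range_intCast_of_sum_eq {ι : Type*} [Fintype ι] {f : ι → ℝ} {n : ℤ}
    (hsum : ∑ i, f i = n) {i : ι} (hi : f i ∉ Set.range ((↑) : ℤ → ℝ)) :
    ∃ i', i' ≠ i ∧ f i' ∉ Set.range ((↑) : ℤ → ℝ) := by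
  classical
  by_contra! h
  choose! g hg using h
  refine hi ⟨n - ∑ k ∈ univ.erase i, g k, ?_⟩
  rw [← add_sum_erase _ _ (mem_univ i)] at hsum
  push_cast
  rw [sum_congr rfl fun k hk => hg k (ne_of_mem_erase hk)]
  linarith

/-- The tables with prescribed row sums `r` and column sums `c` whose entries lie between the floor
and the ceiling of the entries of `X`. -/
def roundingPolytope {R C : Type*} [Fintype R] [Fintype C] (X : R → C → ℝ) (r : R → ℤ)
    (c : C → ℤ) : Set (R → C → ℝ) :=
  {Y | (∀ i j, Y i j ∈ Set.Icc (⌊X i j⌋ : ℝ) ⌈X i j⌉) ∧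
    (∀ i, ∑ j, Y i j = r i) ∧ ∀ j, ∑ i, Y i j = c j}

theorem isCompact_roundingPolytope {R C : Type*} [Fintype R] [Fintype C] (X : R → C → ℝ)
    (r : R → ℤ) (c : C → ℤ) : IsCompact (roundingPolytope X r c) := by
  have hbox : IsCompact (Set.univ.pi fun i => Set.univ.pi fun j =>
      Set.Icc (⌊X i j⌋ : ℝ) ⌈X i j⌉) :=
    isCompact_univ_pi fun i => isCompact_univ_pi fun j => isCompact_Icc
  refine hbox.of_isClosed_subset ?_ fun Y hY i _ j _ => hY.1 i j
  simp only [roundingPolytope, Set.mem_Icc, Set.ofPred_and, Set.ofPred_forall]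
  refine .inter (isClosed_iInter fun i => isClosed_iInter fun j => .inter ?_ ?_)
    (.inter (isClosed_iInter fun i => ?_) (isClosed_iInter fun j => ?_))
  · exact isClosed_le (by fun_prop) (by fun_prop)
  · exact isClosed_le (by fun_prop) (by fun_prop)
  · exact isClosed_eq (by fun_prop) (by fun_prop)
  · exact isClosed_eq (by fun_prop) (by fun_prop)

theorem convex_roundingPolytope {R C : Type*} [Fintype R] [Fintype C] (X : R → C → ℝ)
    (r : R → ℤ) (c : C → ℤ) : Convex ℝ (roundingPolytope X r c) := by
  rintro Y ⟨hY, hYr, hYc⟩ W ⟨hW, hWr, hWc⟩ a b ha hb hab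
  refine ⟨fun i j => convex_Icc _ _ (hY i j) (hW i j) ha hb hab, fun i => ?_, fun j => ?_⟩
  · simp [sum_add_distrib, ← mul_sum, hYr, hWr, ← add_mul, hab]
  · simp [sum_add_distrib, ← mul_sum, hYc, hWc, ← add_mul, hab]

theorem mem_range_intCast_of_mem_extremePoints_roundingPolytope {R C : Type*} [Fintype R]
    [Fintype C] {X : R → C → ℝ} {r : R → ℤ} {c : C → ℤ} {Y : R → C → ℝ}
    (hY : Y ∈ (roundingPolytope X r c).extremePoints ℝ) (i : R) (j : C) :
    Y i j ∈ Set.range ((↑) : ℤ → ℝ) := by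
  classical
  by_contra hij
  obtain ⟨⟨hbox, hr, hc⟩, hext⟩ := hY
  obtain ⟨E, hE0, hEF, hEr, hEc⟩ := exists_ne_zero_sum_eq_zero_of_lines_nontrivial
    (univ.filter fun x : R × C => Y x.1 x.2 ∉ Set.range ((↑) : ℤ → ℝ)) ⟨(i, j), by simpa using hij⟩
    (fun i j h => by
      simpa using exists_ne_notMem_range_intCast_of_sum_eq (hr i) (i := j) (by simpa using h))
    (fun i j h => by
      simpa using exists_ne_notMem_range_intCast_of_sum_eq (f := fun i => Y i j) (hc j) (i := i)
        (by simpa using h))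
  have hnear : ∀ᶠ ε : ℝ in nhds 0, ∀ i j, Y i j + ε * E i j ∈ Set.Icc (⌊X i j⌋ : ℝ) ⌈X i j⌉ := by
    refine Filter.eventually_all.2 fun i => Filter.eventually_all.2 fun j => ?_
    by_cases h : Y i j ∈ Set.range ((↑) : ℤ → ℝ)
    · have : E i j = 0 := hEF i j (by simpa using h)
      simpa [this] using hbox i j
    · have hmem : Y i j ∈ Set.Ioo (⌊X i j⌋ : ℝ) ⌈X i j⌉ :=
        ⟨(hbox i j).1.lt_of_ne fun e => h ⟨_, e⟩, (hbox i j).2.lt_of_ne fun e => h ⟨_, e.symm⟩⟩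
      have hcont : ContinuousAt (fun ε : ℝ => Y i j + ε * E i j) 0 := by fun_prop
      exact (hcont.eventually_mem (isOpen_Ioo.mem_nhds (by simpa using hmem))).mono
        fun ε hε => Set.Ioo_subset_Icc_self hε
  have hmem : ∀ ε : ℝ, (∀ i j, Y i j + ε * E i j ∈ Set.Icc (⌊X i j⌋ : ℝ) ⌈X i j⌉) →
      Y + ε • E ∈ roundingPolytope X r c := fun ε hε =>
    ⟨hε, fun i => by simp [sum_add_distrib, ← mul_sum, hr, hEr],
      fun j => by simp [sum_add_distrib, ← mul_sum, hc, hEc]⟩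
  have hneg : ∀ᶠ ε : ℝ in nhds 0, ∀ i j,
      Y i j + -ε * E i j ∈ Set.Icc (⌊X i j⌋ : ℝ) ⌈X i j⌉ :=
    (show Filter.Tendsto (fun ε : ℝ => -ε) (nhds 0) (nhds 0) by
      simpa using (continuous_neg (G := ℝ)).tendsto 0).eventually hnear
  obtain ⟨ε, ⟨hpos, hminus⟩, hε⟩ := (((hnear.and hneg).filter_mono nhdsWithin_le_nhds).and
    (self_mem_nhdsWithin (a := (0 : ℝ)) (s := Set.Ioi 0))).exists
  have heq : Y + ε • E = Y := hext (hmem ε hpos) (hmem (-ε) hminus)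
    ⟨1 / 2, 1 / 2, by norm_num, by norm_num, by norm_num, by module⟩
  exact hE0 ((smul_eq_zero.1 (add_eq_left.1 heq)).resolve_left (ne_of_gt hε))

/-- A real table with integer row sums and column sums is a convex combination of integer tables
with the same row sums and column sums, each entry being rounded up or down. -/
theorem mem_convexHull_roundings {R C : Type*} [Fintype R] [Fintype C] {X : R → C → ℝ}
    {r : R → ℤ} {c : C → ℤ} (hr : ∀ i, ∑ j, X i j = r i) (hc : ∀ j, ∑ i, X i j = c j) :
    X ∈ convexHull ℝ {Y : R → C → ℝ | (∀ i j, Y i j ∈ ({(⌊X i j⌋ : ℝ), (⌈X i j⌉ : ℝ)} : Set ℝ)) ∧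
      (∀ i, ∑ j, Y i j = r i) ∧ ∀ j, ∑ i, Y i j = c j} := by
  set S := {Y : R → C → ℝ | (∀ i j, Y i j ∈ ({(⌊X i j⌋ : ℝ), (⌈X i j⌉ : ℝ)} : Set ℝ)) ∧
      (∀ i, ∑ j, Y i j = r i) ∧ ∀ j, ∑ i, Y i j = c j}
  have hfin : S.Finite :=
    (Set.Finite.pi' fun i => Set.Finite.pi' fun j => Set.toFinite
      ({(⌊X i j⌋ : ℝ), (⌈X i j⌉ : ℝ)} : Set ℝ)).subset fun Y hY => hY.1
  have hsub : (roundingPolytope X r c).extremePoints ℝ ⊆ S := by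
    intro Y hY
    refine ⟨fun i j => ?_, hY.1.2⟩
    obtain ⟨z, hz⟩ := mem_range_intCast_of_mem_extremePoints_roundingPolytope hY i j
    obtain ⟨hl, hu⟩ := hY.1.1 i j
    rw [← hz] at hl hu ⊢
    norm_cast at hl hu
    have := Int.ceil_le_floor_add_one (X i j)
    simp only [Set.mem_insert_iff, Set.mem_singleton_iff, Int.cast_inj]
    omega
  have hX : X ∈ roundingPolytope X r c :=
    ⟨fun i j => ⟨Int.floor_le _, Int.le_ceil _⟩, hr, hc⟩
  rw [← closure_convexHull_extremePoints (isCompact_roundingPolytope X r c)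
    (convex_roundingPolytope X r c)] at hX
  exact closure_minimal (convexHull_mono hsub) (hfin.isClosed_convexHull ℝ) hX

/-- For every single-period reservation problem there exists a
finitely supported probability distribution over period-1 reservation tables that
stays within quota (almost surely every internal entry and every column total is
the floor or the ceiling of the corresponding fair share) and is unbiased. -/
theorem single_period_unbiased_lottery_within_quota
    (D C : Type) [Fintype D] [Fintype C]
    (hD : 2 ≤ Fintype.card D) (hC : 2 ≤ Fintype.card C)
    (α : C → ℝ) (hα0 : ∀ j, 0 < α j) (hα1 : ∀ j, α j < 1)
    (hαsum : ∑ j, α j = 1)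
    (q : D → ℕ) :
    ∃ (N : ℕ) (p : Fin N → ℝ) (Z : Fin N → D → C → ℕ),
      (∀ k, 0 ≤ p k) ∧ (∑ k, p k = 1) ∧
      (∀ k i, ∑ j, Z k i j = q i) ∧
      (∀ k, p k ≠ 0 → ∀ i j,
        ((Z k i j : ℤ) = ⌊α j * (q i : ℝ)⌋ ∨ (Z k i j : ℤ) = ⌈α j * (q i : ℝ)⌉)) ∧
      (∀ k, p k ≠ 0 → ∀ j,
        (((∑ i, Z k i j : ℕ) : ℤ) = ⌊α j * ((∑ i, q i : ℕ) : ℝ)⌋ ∨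
         ((∑ i, Z k i j : ℕ) : ℤ) = ⌈α j * ((∑ i, q i : ℕ) : ℝ)⌉)) ∧
      (∀ i j, ∑ k, p k * ((Z k i j : ℕ) : ℝ) = α j * (q i : ℝ)) := by
  set c : C → ℝ := fun j => α j * ((∑ i, q i : ℕ) : ℝ) with hc
  set X : Option D → C → ℝ := fun o j => o.elim (⌈c j⌉ - c j) fun i => α j * q i with hX
  have hrow : ∀ i : D, ∑ j, α j * (q i : ℝ) = q i := fun i => by
    rw [← sum_mul, hαsum, one_mul]
  have hcol : ∀ j, ∑ i : D, α j * (q i : ℝ) = c j := fun j => by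
    simp [hc, mul_sum]
  have hcsum : ∑ j, c j = ((∑ i, q i : ℕ) : ℝ) := by
    rw [← sum_mul, hαsum, one_mul]
  have hmem : X ∈ _ := mem_convexHull_roundings
    (r := fun o => o.elim (∑ j, ⌈c j⌉ - (∑ i, q i : ℕ)) fun i => (q i : ℤ))
    (c := fun j => ⌈c j⌉)
    (by
      rintro (_ | i)
      · simp only [hX, Option.elim_none, sum_sub_distrib, hcsum]
        push_cast
        rfl
      · simpa [hX] using hrow i)
    (fun j => by simp [hX, Fintype.sum_option, hcol])
  obtain ⟨ι, _, w, Y, hw0, hw1, hY, hYX⟩ := mem_convexHull_iff_exists_fintype.1 hmem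
  have hnat : ∀ k i j, ((⌊Y k (some i) j⌋₊ : ℕ) : ℝ) = Y k (some i) j := by
    intro k i j
    have h0 : 0 ≤ α j * (q i : ℝ) := mul_nonneg (hα0 j).le (Nat.cast_nonneg _)
    rcases (hY k).1 (some i) j with h | h
    · rw [h, natCast_floor_eq_intCast_floor]
      · simp
      · exact_mod_cast Int.floor_nonneg.2 h0
    · rw [Set.mem_singleton_iff.1 h, natCast_floor_eq_intCast_floor]
      · simp
      · exact_mod_cast Int.ceil_nonneg h0
  let e := (Fintype.equivFin ι).symm
  refine ⟨Fintype.card ι, w ∘ e, fun k i j => ⌊Y (e k) (some i) j⌋₊, fun k => hw0 _,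
    (e.sum_comp w).trans hw1, fun k i => ?_, fun k _ i j => ?_, fun k _ j => ?_, fun i j => ?_⟩
  · have := (hY (e k)).2.1 (some i)
    rw [← Nat.cast_inj (R := ℝ)]
    push_cast
    simpa [hnat] using this
  · rw [← Int.cast_inj (α := ℝ), ← Int.cast_inj (α := ℝ), Int.cast_natCast, hnat]
    exact (hY (e k)).1 (some i) j
  · have hsum := (hY (e k)).2.2 j
    have hnone := (hY (e k)).1 none j
    rw [Fintype.sum_option] at hsum
    have hZ : (((∑ i, ⌊Y (e k) (some i) j⌋₊ : ℕ) : ℤ) : ℝ) = ⌈c j⌉ - Y (e k) none j := by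
      push_cast
      simp only [hnat]
      linarith
    have hfloor : ⌊(⌈c j⌉ : ℝ) - c j⌋ = 0 := by
      rw [sub_eq_add_neg, Int.floor_intCast_add, Int.floor_neg, add_neg_cancel]
    have hceil : ⌈(⌈c j⌉ : ℝ) - c j⌉ = ⌈c j⌉ - ⌊c j⌋ := by
      rw [sub_eq_add_neg, Int.ceil_intCast_add, Int.ceil_neg, sub_eq_add_neg]
    simp only [hX, Option.elim_none, hfloor, hceil, Set.mem_insert_iff,
      Set.mem_singleton_iff] at hnone
    rw [← Int.cast_inj (α := ℝ), ← Int.cast_inj (α := ℝ), hZ]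
    rcases hnone with h | h <;> rw [h]
    · exact .inr (by simp [hc])
    · exact .inl (by simp [hc])
  · simp only [hnat, Function.comp_apply]
    rw [e.sum_comp fun k => w k * Y k (some i) j]
    simpa [hX] using congrFun (congrFun hYX (some i)) j
end

section
/- For every single-period reservation problem there exists a period-1 reservation table Z such that every internal entry satisfies Z_{ij} ∈ {⌊α_j q_i⌋, ⌈α_j q_i⌉} and every column total satisfies ∑_{i∈D} Z_{ij} ∈ {⌊α_j ∑_{i∈D} q_i⌋, ⌈α_j ∑_{i∈D} q_i⌉} (i.e., a deterministic single-period solution staying within quota exists). -/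
open Finset

/-- A nonempty set of cells of a table which meets no row and no column in exactly one cell
supports a nonzero real table whose row sums and column sums all vanish. -/
lemma exists_ne_zero_supported_sum_eq_zero {R C : Type*} [Fintype R] [Fintype C]
    [DecidableEq R] [DecidableEq C] (S : Finset (R × C)) (hS : S.Nonempty)
    (hrow : ∀ p ∈ S, ∃ p' ∈ S, p'.1 = p.1 ∧ p' ≠ p)
    (hcol : ∀ p ∈ S, ∃ p' ∈ S, p'.2 = p.2 ∧ p' ≠ p) :
    ∃ y : R × C → ℝ, y ≠ 0 ∧ (∀ p ∉ S, y p = 0) ∧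
      (∀ i, ∑ j, y (i, j) = 0) ∧ (∀ j, ∑ i, y (i, j) = 0) := by
  obtain ⟨c, hc⟩ : (S.image Prod.snd).Nonempty := hS.image _
  have hR : 2 * #(S.image Prod.fst) ≤ #S := by
    refine mul_card_image_le_card S 2 fun a ha => ?_
    obtain ⟨p, hp, rfl⟩ := mem_image.1 ha
    obtain ⟨p', hp', h1, h2⟩ := hrow p hp
    exact one_lt_card.2 ⟨p', by simp [hp', h1], p, by simp [hp], h2⟩
  have hC : 2 * #(S.image Prod.snd) ≤ #S := by
    refine mul_card_image_le_card S 2 fun a ha => ?_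
    obtain ⟨p, hp, rfl⟩ := mem_image.1 ha
    obtain ⟨p', hp', h1, h2⟩ := hcol p hp
    exact one_lt_card.2 ⟨p', by simp [hp', h1], p, by simp [hp], h2⟩
  let f : (R × C → ℝ) →ₗ[ℝ] (S.image Prod.fst → ℝ) ×
      (((S.image Prod.snd).erase c : Finset C) → ℝ) × ((Sᶜ : Finset (R × C)) → ℝ) :=
    { toFun := fun y => (fun i => ∑ j, y (i, j), fun j => ∑ i, y (i, j), fun p => y p)
      map_add' := fun y z => by ext <;> simp [sum_add_distrib]
      map_smul' := fun a y => by ext <;> simp [mul_sum] }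
  have hker : LinearMap.ker f ≠ ⊥ := by
    apply LinearMap.ker_ne_bot_of_finrank_lt
    have h1 := card_erase_of_mem hc
    have h2 := card_compl_add_card S
    have h3 : 0 < #(S.image Prod.snd) := card_pos.2 ⟨c, hc⟩
    simp only [Module.finrank_prod, Module.finrank_fintype_fun_eq_card, Fintype.card_coe]
    omega
  obtain ⟨y, hy, hy0⟩ := Submodule.exists_mem_ne_zero_of_ne_bot hker
  have hfy : f y = 0 := hy
  have hsupp : ∀ p ∉ S, y p = 0 := fun p hp =>
    congrFun (congrArg (fun t => t.2.2) hfy) ⟨p, mem_compl.2 hp⟩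
  have hrows : ∀ i, ∑ j, y (i, j) = 0 := by
    intro i
    by_cases hi : i ∈ S.image Prod.fst
    · exact congrFun (congrArg (fun t => t.1) hfy) ⟨i, hi⟩
    · exact sum_eq_zero fun j _ => hsupp _ fun h => hi (mem_image_of_mem Prod.fst h)
  have hcols : ∀ j, j ≠ c → ∑ i, y (i, j) = 0 := by
    intro j hjc
    by_cases hj : j ∈ S.image Prod.snd
    · exact congrFun (congrArg (fun t => t.2.1) hfy) ⟨j, mem_erase.2 ⟨hjc, hj⟩⟩
    · exact sum_eq_zero fun i _ => hsupp _ fun h => hj (mem_image_of_mem Prod.snd h)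
  refine ⟨y, hy0, hsupp, hrows, fun j => ?_⟩
  by_cases hj : j = c
  · subst hj
    rw [← Fintype.sum_eq_single (f := fun j => ∑ i, y (i, j)) j hcols, sum_comm]
    exact sum_eq_zero fun i _ => hrows i
  · exact hcols j hj

/-- If a finite sum is an integer, then no summand is the only non-integral one. -/
lemma exists_ne_not_integral_of_sum_integral {ι : Type*} [Fintype ι] (x : ι → ℝ)
    (hx : ∃ n : ℤ, ∑ i, x i = n) (i : ι) (hi : ¬ ∃ n : ℤ, x i = n) :
    ∃ k, k ≠ i ∧ ¬ ∃ n : ℤ, x k = n := by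
  classical
  by_contra! h
  obtain ⟨n, hn⟩ := hx
  choose! m hm using h
  refine hi ⟨n - ∑ k ∈ univ.erase i, m k, ?_⟩
  rw [← add_sum_erase univ x (mem_univ i),
    sum_congr rfl fun k hk => hm k (ne_of_mem_erase hk)] at hn
  push_cast
  linarith

/-- Moving along a nonzero direction, one can reach a point at which some varying coordinate is
integral, without any coordinate passing an integer. -/
lemma exists_step_to_integral {ι : Type*} [Fintype ι] (x y : ι → ℝ) (hy : y ≠ 0) :
    ∃ t : ℝ, (∀ p, (⌊x p⌋ : ℝ) ≤ x p + t * y p ∧ x p + t * y p ≤ ⌈x p⌉) ∧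
      ∃ p, y p ≠ 0 ∧ ∃ n : ℤ, x p + t * y p = n := by
  classical
  let target : ι → ℤ := fun p => if 0 < y p then ⌈x p⌉ else ⌊x p⌋
  obtain ⟨p₀, hp₀⟩ := Function.ne_iff.1 hy
  obtain ⟨p, hp, hmin⟩ := exists_min_image (univ.filter fun p => y p ≠ 0)
    (fun p => (target p - x p) / y p) ⟨p₀, by simpa using hp₀⟩
  have hyp : y p ≠ 0 := by simpa using hp
  have hnonneg : 0 ≤ (target p - x p) / y p := by
    simp only [target]
    split_ifs with h
    · exact div_nonneg (sub_nonneg.2 (Int.le_ceil _)) h.le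
    · exact div_nonneg_of_nonpos (sub_nonpos.2 (Int.floor_le _)) (not_lt.1 h)
  refine ⟨(target p - x p) / y p, fun k => ?_, p, hyp, target p, by field_simp; ring⟩
  have hfl := Int.floor_le (x k)
  have hce := Int.le_ceil (x k)
  rcases lt_trichotomy (y k) 0 with hk | hk | hk
  · have h := hmin k (by simpa using hk.ne)
    have hm := mul_nonpos_of_nonneg_of_nonpos hnonneg hk.le
    rw [le_div_iff_of_neg hk] at h
    simp only [show target k = ⌊x k⌋ from if_neg hk.not_gt] at h
    constructor <;> linarith
  · simpa [hk] using ⟨hfl, hce⟩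
  · have h := hmin k (by simpa using hk.ne')
    have hm := mul_nonneg hnonneg hk.le
    rw [le_div_iff₀ hk] at h
    simp only [show target k = ⌈x k⌉ from if_pos hk] at h
    constructor <;> linarith

/-- A real table with integral row and column sums can be rounded entrywise to an integral table
with the same row and column sums. -/
theorem exists_integral_rounding {R C : Type*} [Fintype R] [Fintype C] (x : R × C → ℝ)
    (hrow : ∀ i, ∃ n : ℤ, ∑ j, x (i, j) = n) (hcol : ∀ j, ∃ n : ℤ, ∑ i, x (i, j) = n) :
    ∃ z : R × C → ℤ, (∀ p, ⌊x p⌋ ≤ z p ∧ z p ≤ ⌈x p⌉) ∧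
      (∀ i, ∑ j, (z (i, j) : ℝ) = ∑ j, x (i, j)) ∧
      (∀ j, ∑ i, (z (i, j) : ℝ) = ∑ i, x (i, j)) := by
  classical
  induction hN : #(univ.filter fun p => ¬ ∃ n : ℤ, x p = n) using Nat.strong_induction_on
    generalizing x with
  | _ N ih =>
  set S := univ.filter fun p => ¬ ∃ n : ℤ, x p = n with hSdef
  have hmem : ∀ p, p ∈ S ↔ ¬ ∃ n : ℤ, x p = n := fun p => by simp [hSdef]
  rcases S.eq_empty_or_nonempty with hS | hS
  · have hint : ∀ p, ∃ n : ℤ, x p = n := fun p => by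
      by_contra h
      simpa [hS] using (hmem p).2 h
    choose z hz using hint
    exact ⟨z, fun p => by simp [hz], fun i => by simp [hz], fun j => by simp [hz]⟩
  obtain ⟨y, hy0, hsupp, hyrow, hycol⟩ := exists_ne_zero_supported_sum_eq_zero S hS
    (by
      rintro ⟨i, j⟩ hp
      obtain ⟨k, hk, hxk⟩ := exists_ne_not_integral_of_sum_integral (fun j => x (i, j))
        (hrow i) j ((hmem _).1 hp)
      exact ⟨(i, k), (hmem _).2 hxk, rfl, by simpa using hk⟩)
    (by
      rintro ⟨i, j⟩ hp
      obtain ⟨k, hk, hxk⟩ := exists_ne_not_integral_of_sum_integral (fun i => x (i, j))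
        (hcol j) i ((hmem _).1 hp)
      exact ⟨(k, j), (hmem _).2 hxk, rfl, by simpa using hk⟩)
  have hyS : ∀ p, y p ≠ 0 → p ∈ S := fun p hp => by
    by_contra h
    exact hp (hsupp p h)
  obtain ⟨t, ht, p₀, hp₀, hint⟩ := exists_step_to_integral x y hy0
  have hrow' : ∀ i, ∑ j, (x (i, j) + t * y (i, j)) = ∑ j, x (i, j) := fun i => by
    rw [sum_add_distrib, ← mul_sum, hyrow, mul_zero, add_zero]
  have hcol' : ∀ j, ∑ i, (x (i, j) + t * y (i, j)) = ∑ i, x (i, j) := fun j => by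
    rw [sum_add_distrib, ← mul_sum, hycol, mul_zero, add_zero]
  have hlt : #(univ.filter fun p => ¬ ∃ n : ℤ, x p + t * y p = n) < N := by
    rw [← hN]
    refine card_lt_card ((ssubset_iff_of_subset fun p hp => ?_).2 ⟨p₀, hyS p₀ hp₀, ?_⟩)
    · by_contra h
      have hx := h
      rw [hmem, not_not] at hx
      exact (mem_filter.1 hp).2 (by simpa [hsupp p h] using hx)
    · simpa using hint
  obtain ⟨z, hz, hzrow, hzcol⟩ := ih _ hlt (fun p => x p + t * y p)
    (fun i => by simpa only [hrow'] using hrow i) (fun j => by simpa only [hcol'] using hcol j) rfl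
  exact ⟨z, fun p => ⟨(Int.le_floor.2 (ht p).1).trans (hz p).1,
    (hz p).2.trans (Int.ceil_le.2 (ht p).2)⟩, fun i => (hzrow i).trans (hrow' i),
    fun j => (hzcol j).trans (hcol' j)⟩

/-- An integer between the floor and the ceiling of a real number is one of the two. -/
lemma eq_floor_or_eq_ceil {x : ℝ} {n : ℤ} (h₁ : ⌊x⌋ ≤ n) (h₂ : n ≤ ⌈x⌉) :
    n = ⌊x⌋ ∨ n = ⌈x⌉ := by
  have := Int.ceil_le_floor_add_one x
  omega

/-- For every single-period reservation problem there exists a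
period-1 reservation table whose every internal entry is the floor or the ceiling
of the corresponding department fair share and whose every column total is the
floor or the ceiling of the corresponding university fair share. -/
theorem single_period_deterministic_within_quota
    (D C : Type) [Fintype D] [Fintype C]
    (hD : 2 ≤ Fintype.card D) (hC : 2 ≤ Fintype.card C)
    (α : C → ℝ) (hα0 : ∀ j, 0 < α j) (hα1 : ∀ j, α j < 1)
    (hαsum : ∑ j, α j = 1)
    (q : D → ℕ) :
    ∃ Z : D → C → ℕ,
      (∀ i, ∑ j, Z i j = q i) ∧
      (∀ i j, (Z i j : ℤ) = ⌊α j * (q i : ℝ)⌋ ∨ (Z i j : ℤ) = ⌈α j * (q i : ℝ)⌉) ∧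
      (∀ j, ((∑ i, Z i j : ℕ) : ℤ) = ⌊α j * ((∑ i, q i : ℕ) : ℝ)⌋ ∨
            ((∑ i, Z i j : ℕ) : ℤ) = ⌈α j * ((∑ i, q i : ℕ) : ℝ)⌉) := by
  -- The additional row `none` balances the columns.
  let w : Option D → ℤ := fun i => i.elim (-((∑ i, q i : ℕ) : ℤ)) fun i => q i
  have hw : ∑ i, (w i : ℝ) = 0 := by simp [w, Fintype.sum_option]
  obtain ⟨z, hz, hzrow, hzcol⟩ := exists_integral_rounding
    (fun p : Option D × C => α p.2 * (w p.1 : ℝ))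
    (fun i => ⟨w i, by simp only [← sum_mul, hαsum, one_mul]⟩)
    (fun j => ⟨0, by simp only [← mul_sum, hw, mul_zero, Int.cast_zero]⟩)
  have hz0 : ∀ i j, 0 ≤ z (some i, j) := fun i j =>
    (Int.floor_nonneg.2 (mul_nonneg (hα0 j).le (by simp [w]))).trans (hz (some i, j)).1
  have hZ : ∀ i j, ((z (some i, j)).toNat : ℤ) = z (some i, j) := fun i j =>
    Int.toNat_of_nonneg (hz0 i j)
  refine ⟨fun i j => (z (some i, j)).toNat, fun i => ?_, fun i j => ?_, fun j => ?_⟩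
  · have h := hzrow (some i)
    simp only [← sum_mul, hαsum, one_mul] at h
    zify
    simp only [hZ]
    exact_mod_cast h
  · rw [hZ]
    exact eq_floor_or_eq_ceil (by simpa [w] using (hz (some i, j)).1)
      (by simpa [w] using (hz (some i, j)).2)
  · have h := hzcol j
    simp only [← mul_sum, hw, mul_zero, Fintype.sum_option] at h
    have h' : z (none, j) + ∑ i, z (some i, j) = 0 := by exact_mod_cast h
    have hwn : α j * (w none : ℝ) = -(α j * ((∑ i, q i : ℕ) : ℝ)) := by simp [w]
    have hn := hz (none, j)
    simp only [hwn, Int.floor_neg, Int.ceil_neg] at hn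
    rw [Nat.cast_sum]
    simp only [hZ]
    exact eq_floor_or_eq_ceil (by omega) (by omega)
end

section
/- Let A be an m×n matrix of nonnegative real numbers each of whose row sums ∑_{j} A_{ij} is an integer. Then there exists a finitely supported random integer matrix Z (a probability distribution over integer m×n matrices) such that: almost surely Z_{ij} ∈ {⌊A_{ij}⌋, ⌈A_{ij}⌉} for all i,j; almost surely ∑_j Z_{ij} = ∑_j A_{ij} for every row i; almost surely ∑_i Z_{ij} ∈ {⌊∑_i A_{ij}⌋, ⌈∑_i A_{ij}⌉} for every column j; and E[Z_{ij}] = A_{ij} for all i,j (unbiased controlled rounding). -/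
open Finset

/-- The integers as an additive subgroup of the reals. -/
abbrev realIntegers : AddSubgroup ℝ := (Int.castAddHom ℝ).range

lemma exists_ne_mem_of_sum_mem {M κ : Type*} [AddCommGroup M] [Fintype κ] (H : AddSubgroup M)
    {x : κ → M} (hx : ∑ k, x k ∈ H) {j : κ} (hj : x j ∉ H) : ∃ k ≠ j, x k ∉ H := by
  classical
  by_contra! h
  apply hj
  rw [← Finset.add_sum_erase univ x (mem_univ j)] at hx
  exact (H.add_mem_cancel_right
    (sum_mem fun k hk => h k (ne_of_mem_erase hk))).1 hx

/-- If every row of a relation is empty or has two elements, then it has at least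
twice as many pairs as nonempty rows. -/
lemma two_mul_card_rows_le {ι κ : Type*} [Fintype ι] [Fintype κ] (S : ι → κ → Prop)
    (hS : ∀ i j, S i j → ∃ k ≠ j, S i k) :
    2 * Nat.card {i // ∃ j, S i j} ≤ Nat.card {p : ι × κ // S p.1 p.2} := by
  classical
  choose! f hf hf' using hS
  choose g hg using fun r : {i // ∃ j, S i j} => r.2
  let φ : Bool × {i // ∃ j, S i j} → {p : ι × κ // S p.1 p.2} := fun q =>
    if q.1 then ⟨(q.2, g q.2), hg q.2⟩ else ⟨(q.2, f q.2 (g q.2)), hf' _ _ (hg q.2)⟩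
  have hφ : Function.Injective φ := by
    rintro ⟨b, r⟩ ⟨b', r'⟩ h
    have h1 : r = r' := by
      have := congrArg (fun p => p.1.1) h
      cases b <;> cases b' <;> exact Subtype.ext (by simpa [φ] using this)
    subst h1
    have h2 := congrArg (fun p => p.1.2) h
    have h3 := hf _ _ (hg r)
    cases b <;> cases b'
    · rfl
    · exact absurd h2 h3
    · exact absurd h2.symm h3
    · rfl
  simpa using Nat.card_le_card_of_injective φ hφ

/-- A relation in which every row and every column is empty or has at least two elements
supports a nonzero real matrix with vanishing row and column sums. -/
lemma exists_ne_zero_sum_eq_zero {ι κ : Type*} [Fintype ι] [Fintype κ] (S : ι → κ → Prop)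
    (hr : ∀ i j, S i j → ∃ k ≠ j, S i k) (hc : ∀ i j, S i j → ∃ k ≠ i, S k j)
    (hne : ∃ i j, S i j) :
    ∃ D : ι → κ → ℝ, D ≠ 0 ∧ (∀ i j, ¬ S i j → D i j = 0) ∧
      (∀ i, ∑ j, D i j = 0) ∧ ∀ j, ∑ i, D i j = 0 := by
  classical
  let E : ({p : ι × κ // S p.1 p.2} → ℝ) →ₗ[ℝ] (ι → κ → ℝ) :=
    { toFun := fun v i j => if h : S i j then v ⟨(i, j), h⟩ else 0
      map_add' := by intro v w; ext i j; by_cases h : S i j <;> simp [h]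
      map_smul' := by intro c v; ext i j; by_cases h : S i j <;> simp [h] }
  have hE : ∀ v i j, ¬ S i j → E v i j = 0 := fun v i j h => by simp [E, h]
  have hEr : ∀ v i, (¬ ∃ j, S i j) → ∑ j, E v i j = 0 := fun v i h =>
    sum_eq_zero fun j _ => hE v i j fun hj => h ⟨j, hj⟩
  have hEc : ∀ v j, (¬ ∃ i, S i j) → ∑ i, E v i j = 0 := fun v j h =>
    sum_eq_zero fun i _ => hE v i j fun hi => h ⟨i, hi⟩
  let L : ({p : ι × κ // S p.1 p.2} → ℝ) →ₗ[ℝ] ({i // ∃ j, S i j} ⊕ {j // ∃ i, S i j} → ℝ) :=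
    { toFun := fun v => Sum.elim (fun i => ∑ j, E v i j) (fun j => ∑ i, E v i j)
      map_add' := by intro v w; ext (i | j) <;> simp [sum_add_distrib]
      map_smul' := by intro c v; ext (i | j) <;> simp [mul_sum] }
  have hL : ¬ Function.Injective L := by
    intro hinj
    have hcard : Nat.card {i // ∃ j, S i j} + Nat.card {j // ∃ i, S i j}
        ≤ Nat.card {p : ι × κ // S p.1 p.2} := by
      have h1 := two_mul_card_rows_le S hr
      have h2 := two_mul_card_rows_le (fun j i => S i j) (fun j i h => hc i j h)
      have h3 : Nat.card {p : κ × ι // S p.2 p.1} = Nat.card {p : ι × κ // S p.1 p.2} :=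
        Nat.card_congr ((Equiv.prodComm κ ι).subtypeEquiv fun _ => Iff.rfl)
      omega
    have hfin : Module.finrank ℝ ({p : ι × κ // S p.1 p.2} → ℝ) =
        Module.finrank ℝ ({i // ∃ j, S i j} ⊕ {j // ∃ i, S i j} → ℝ) := by
      apply le_antisymm (LinearMap.finrank_le_finrank_of_injective hinj)
      simpa [Nat.card_eq_fintype_card] using hcard
    have hsurj := (LinearMap.injective_iff_surjective_of_finrank_eq_finrank hfin).1 hinj
    obtain ⟨i, j, hij⟩ := hne
    obtain ⟨v, hv⟩ := hsurj (Pi.single (Sum.inl ⟨i, j, hij⟩) 1)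
    have hv1 : ∑ i, ∑ j, E v i j = 1 := by
      rw [sum_eq_single i]
      · simpa [L] using congrFun hv (Sum.inl ⟨i, j, hij⟩)
      · intro k _ hk
        by_cases h : ∃ j, S k j
        · simpa [L, hk] using congrFun hv (Sum.inl ⟨k, h⟩)
        · exact hEr v k h
      · simp
    have hv0 : ∑ j, ∑ i, E v i j = 0 := by
      refine sum_eq_zero fun k _ => ?_
      by_cases h : ∃ i, S i k
      · simpa [L] using congrFun hv (Sum.inr ⟨k, h⟩)
      · exact hEc v k h
    rw [sum_comm, hv0] at hv1
    exact zero_ne_one hv1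
  rw [injective_iff_map_eq_zero] at hL
  push Not at hL
  obtain ⟨v, hv, hv0⟩ := hL
  refine ⟨E v, ?_, hE v, fun i => ?_, fun j => ?_⟩
  · intro h
    apply hv0
    ext ⟨⟨i, j⟩, hij⟩
    simpa [E, hij] using congrFun (congrFun h i) j
  · by_cases h : ∃ j, S i j
    · exact congrFun hv (Sum.inl ⟨i, h⟩)
    · exact hEr v i h
  · by_cases h : ∃ i, S i j
    · exact congrFun hv (Sum.inr ⟨j, h⟩)
    · exact hEc v j h

lemma floor_lt_of_notMem_realIntegers {x : ℝ} (hx : x ∉ realIntegers) : (⌊x⌋ : ℝ) < x :=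
  lt_of_le_of_ne (Int.floor_le x) fun h => hx ⟨⌊x⌋, h⟩

lemma lt_ceil_of_notMem_realIntegers {x : ℝ} (hx : x ∉ realIntegers) : x < ⌈x⌉ :=
  lt_of_le_of_ne (Int.le_ceil x) fun h => hx ⟨⌈x⌉, h.symm⟩

/-- Moving from `x` along a direction supported on the nonintegral coordinates, one reaches
a first point at which some nonintegral coordinate becomes integral. -/
lemma exists_pos_add_mul_mem_realIntegers {σ : Type*} [Fintype σ] (x d : σ → ℝ) (hd : d ≠ 0)
    (hs : ∀ s, x s ∈ realIntegers → d s = 0) :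
    ∃ t > 0, (∀ s, (⌊x s⌋ : ℝ) ≤ x s + t * d s ∧ x s + t * d s ≤ ⌈x s⌉) ∧
      ∃ s, x s ∉ realIntegers ∧ x s + t * d s ∈ realIntegers := by
  classical
  let e : σ → ℝ := fun s => if 0 < d s then ⌈x s⌉ else ⌊x s⌋
  let τ : σ → ℝ := fun s => (e s - x s) / d s
  have hτ : ∀ s, d s ≠ 0 → 0 < τ s := by
    intro s h
    have hx : x s ∉ realIntegers := fun hx => h (hs s hx)
    by_cases hp : 0 < d s
    · simp only [τ, e, if_pos hp]
      exact div_pos (sub_pos.2 (lt_ceil_of_notMem_realIntegers hx)) hp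
    · simp only [τ, e, if_neg hp]
      exact div_pos_of_neg_of_neg (sub_neg.2 (floor_lt_of_notMem_realIntegers hx))
        (lt_of_le_of_ne (not_lt.1 hp) h)
  obtain ⟨s₀, hs₀⟩ := Function.ne_iff.1 hd
  obtain ⟨s, hsm, hmin⟩ := exists_min_image (univ.filter fun s => d s ≠ 0) τ ⟨s₀, by simpa using hs₀⟩
  simp only [mem_filter, mem_univ, true_and] at hsm hmin
  refine ⟨τ s, hτ s hsm, fun r => ?_, s, fun h => hsm (hs s h), ?_⟩
  · have hf := Int.floor_le (x r)
    have hc := Int.le_ceil (x r)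
    by_cases hr : d r = 0
    · simpa [hr] using ⟨hf, hc⟩
    have hm := hmin r hr
    have hpos := hτ s hsm
    have he : τ r * d r = e r - x r := div_mul_cancel₀ _ hr
    by_cases hp : 0 < d r
    · simp only [e, if_pos hp] at he
      constructor <;> nlinarith
    · simp only [e, if_neg hp] at he
      constructor <;> nlinarith
  · have he : x s + τ s * d s = e s := by
      rw [div_mul_cancel₀ _ hsm]; ring
    rw [he]
    by_cases hp : 0 < d s
    · exact ⟨⌈x s⌉, by simp [e, hp]⟩
    · exact ⟨⌊x s⌋, by simp [e, hp]⟩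

/-- The entrywise integral roundings of `B` with the same row and column sums as `B`. -/
def exactRoundings {ι κ : Type*} [Fintype ι] [Fintype κ] (B : ι → κ → ℝ) : Set (ι → κ → ℝ) :=
  {X | (∀ i j, X i j ∈ realIntegers ∧ (⌊B i j⌋ : ℝ) ≤ X i j ∧ X i j ≤ ⌈B i j⌉) ∧
    (∀ i, ∑ j, X i j = ∑ j, B i j) ∧ ∀ j, ∑ i, X i j = ∑ i, B i j}

/-- A real matrix with integral row and column sums is a convex combination of its roundings
with the same row and column sums. -/
theorem mem_convexHull_exactRoundings {ι κ : Type*} [Fintype ι] [Fintype κ] (B : ι → κ → ℝ)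
    (hr : ∀ i, ∑ j, B i j ∈ realIntegers) (hc : ∀ j, ∑ i, B i j ∈ realIntegers) :
    B ∈ convexHull ℝ (exactRoundings B) := by
  classical
  induction hN : #{p : ι × κ | B p.1 p.2 ∉ realIntegers} using Nat.strong_induction_on
    generalizing B with
  | _ N ih =>
  by_cases hne : ∃ i j, B i j ∉ realIntegers
  swap
  · push Not at hne
    exact subset_convexHull _ _
      ⟨fun i j => ⟨hne i j, Int.floor_le _, Int.le_ceil _⟩, fun _ => rfl, fun _ => rfl⟩
  obtain ⟨D, hD, hDS, hDr, hDc⟩ := exists_ne_zero_sum_eq_zero (fun i j => B i j ∉ realIntegers)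
    (fun i j h => exists_ne_mem_of_sum_mem _ (hr i) h)
    (fun i j h => exists_ne_mem_of_sum_mem _ (hc j) h) hne
  have key : ∀ F : ι → κ → ℝ, F ≠ 0 → (∀ i j, B i j ∈ realIntegers → F i j = 0) →
      (∀ i, ∑ j, F i j = 0) → (∀ j, ∑ i, F i j = 0) →
      ∃ t > (0 : ℝ), B + t • F ∈ convexHull ℝ (exactRoundings B) := by
    intro F hF hFS hFr hFc
    obtain ⟨t, ht, hbox, ⟨⟨i₀, j₀⟩, hs, hs'⟩⟩ := exists_pos_add_mul_mem_realIntegers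
      (fun p : ι × κ => B p.1 p.2) (fun p => F p.1 p.2)
      (fun h => hF (by ext i j; exact congrFun h (i, j))) (fun p => hFS p.1 p.2)
    have hrow : ∀ i, ∑ j, (B + t • F) i j = ∑ j, B i j := fun i => by
      simp [sum_add_distrib, ← mul_sum, hFr]
    have hcol : ∀ j, ∑ i, (B + t • F) i j = ∑ i, B i j := fun j => by
      simp [sum_add_distrib, ← mul_sum, hFc]
    refine ⟨t, ht, convexHull_mono ?_ (ih _ ?_ (B + t • F) (fun i => hrow i ▸ hr i)
      (fun j => hcol j ▸ hc j) rfl)⟩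
    · rintro X ⟨hX, hXr, hXc⟩
      refine ⟨fun i j => ⟨(hX i j).1, le_trans ?_ (hX i j).2.1, (hX i j).2.2.trans ?_⟩,
        fun i => (hXr i).trans (hrow i), fun j => (hXc j).trans (hcol j)⟩
      · exact_mod_cast Int.le_floor.2 (hbox (i, j)).1
      · exact_mod_cast Int.ceil_le.2 (hbox (i, j)).2
    · rw [← hN]
      refine card_lt_card (ssubset_iff_of_subset ?_ |>.2 ⟨(i₀, j₀), ?_, ?_⟩)
      · rintro ⟨i, j⟩
        simp only [mem_filter, mem_univ, true_and]
        intro h hB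
        apply h
        simpa [hFS i j hB] using hB
      · simpa using hs
      · simpa using hs'
  obtain ⟨t, ht, hmem⟩ := key D hD (fun i j h => hDS i j (not_not.2 h)) hDr hDc
  obtain ⟨u, hu, hmem'⟩ := key (-D) (neg_ne_zero.2 hD)
    (fun i j h => by simp [hDS i j (not_not.2 h)]) (fun i => by simp [hDr])
    (fun j => by simp [hDc])
  have hconv := convex_convexHull ℝ (exactRoundings B) hmem hmem'
    (div_nonneg hu.le (add_pos ht hu).le) (div_nonneg ht.le (add_pos ht hu).le)
    (by field_simp; ring)
  convert hconv using 1
  ext i j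
  simp only [Pi.add_apply, Pi.smul_apply, Pi.neg_apply, smul_eq_mul]
  field_simp
  ring

lemma eq_floor_or_eq_ceil_s2 {x : ℝ} {z : ℤ} (hf : ⌊x⌋ ≤ z) (hc : z ≤ ⌈x⌉) :
    z = ⌊x⌋ ∨ z = ⌈x⌉ := by
  have := Int.ceil_le_floor_add_one x
  omega

/-- Unbiased controlled rounding: for every nonnegative real
matrix with integer row sums there is a finitely supported random integer matrix
which almost surely rounds each entry up or down, almost surely preserves the
(integer) row sums, almost surely rounds each column sum up or down, and whose
expected entries equal the original entries. -/
theorem unbiased_controlled_rounding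
    (m n : ℕ) (A : Fin m → Fin n → ℝ)
    (hA : ∀ i j, 0 ≤ A i j)
    (hrow : ∀ i, ∃ z : ℤ, ∑ j, A i j = z) :
    ∃ (N : ℕ) (p : Fin N → ℝ) (Z : Fin N → Fin m → Fin n → ℤ),
      (∀ k, 0 ≤ p k) ∧ (∑ k, p k = 1) ∧
      (∀ k, p k ≠ 0 → ∀ i j, Z k i j = ⌊A i j⌋ ∨ Z k i j = ⌈A i j⌉) ∧
      (∀ k, p k ≠ 0 → ∀ i, ((∑ j, Z k i j : ℤ) : ℝ) = ∑ j, A i j) ∧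
      (∀ k, p k ≠ 0 → ∀ j,
        (∑ i, Z k i j) = ⌊∑ i, A i j⌋ ∨ (∑ i, Z k i j) = ⌈∑ i, A i j⌉) ∧
      (∀ i j, ∑ k, p k * ((Z k i j : ℤ) : ℝ) = A i j) := by
  have hrow' : ∀ i, ∑ j, A i j ∈ realIntegers := fun i => (hrow i).imp fun z hz => hz.symm
  -- An extra row makes all column sums vanish; its sum is integral because the others are.
  let B : Option (Fin m) → Fin n → ℝ := fun o j => o.elim (-∑ i, A i j) fun i => A i j
  have hcolB : ∀ j, ∑ o, B o j = 0 := fun j => by simp [B, Fintype.sum_option]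
  have hB := mem_convexHull_exactRoundings B
    (by
      rintro (_ | i)
      · simp only [B, Option.elim_none, sum_neg_distrib]
        rw [sum_comm]
        exact neg_mem (sum_mem fun i _ => hrow' i)
      · exact hrow' i)
    (fun j => by rw [hcolB]; exact zero_mem _)
  rw [mem_convexHull_iff_exists_fintype] at hB
  obtain ⟨α, _, w, X, hw, hw1, hX, hsum⟩ := hB
  choose Z hZ using fun k i j => ((hX k).1 i j).1
  have hZ' : ∀ k i j, ((Z k i j : ℤ) : ℝ) = X k i j := hZ
  let e := (Fintype.equivFin α).symm
  refine ⟨Fintype.card α, w ∘ e, fun k i j => Z (e k) (some i) j, fun k => hw _, ?_,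
    fun k _ i j => ?_, fun k _ i => ?_, fun k _ j => ?_, fun i j => ?_⟩
  · exact (e.sum_comp w).trans hw1
  · have h := ((hX (e k)).1 (some i) j).2
    rw [← hZ'] at h
    exact eq_floor_or_eq_ceil_s2 (by exact_mod_cast h.1) (by exact_mod_cast h.2)
  · push_cast
    simp only [hZ']
    exact (hX (e k)).2.1 (some i)
  · have h := ((hX (e k)).1 none j).2
    have hc := (hX (e k)).2.2 j
    rw [hcolB, Fintype.sum_option] at hc
    simp only [← hZ', B, Option.elim_none, Int.floor_neg, Int.ceil_neg] at h hc
    norm_cast at h hc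
    beta_reduce
    exact eq_floor_or_eq_ceil_s2 (by omega) (by omega)
  · have h := congrFun (congrFun hsum (some i)) j
    simp only [Finset.sum_apply, Pi.smul_apply, smul_eq_mul] at h
    simp only [hZ', Function.comp_apply]
    exact (e.sum_comp fun k => w k * X k (some i) j).trans h
end

section
/- Let A be an m×n real matrix all of whose row sums and all of whose column sums are integers, and suppose A has at least one non-integer entry. Then there exist β ∈ (0,1) and real m×n matrices B and C such that: A = β·B + (1−β)·C; B and C have the same row sums and the same column sums as A; ⌊A_{ij}⌋ ≤ B_{ij} ≤ ⌈A_{ij}⌉ and ⌊A_{ij}⌋ ≤ C_{ij} ≤ ⌈A_{ij}⌉ for all i,j; and each of B and C has strictly fewer non-integer entries than A. -/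
open Finset

/-- If a finite sum of reals is an integer, it cannot have exactly one non-integer term. -/
theorem exists_ne_not_int_of_sum_int {κ : Type*} [Fintype κ] [DecidableEq κ] (f : κ → ℝ)
    (hf : ∃ z : ℤ, ∑ j, f j = z) {j : κ} (hj : ¬ ∃ z : ℤ, f j = z) :
    ∃ k, k ≠ j ∧ ¬ ∃ z : ℤ, f k = z := by
  by_contra! h
  apply hj
  have hmem : ∑ k ∈ univ.erase j, f k ∈ (Int.castAddHom ℝ).range := by
    refine sum_mem fun k hk => ?_
    obtain ⟨z, hz⟩ := h k (ne_of_mem_erase hk)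
    exact ⟨z, hz.symm⟩
  obtain ⟨w, hw⟩ := hmem
  obtain ⟨z, hz⟩ := hf
  refine ⟨z - w, ?_⟩
  have hsum := add_sum_erase univ f (mem_univ j)
  have hw' : (w : ℝ) = ∑ k ∈ univ.erase j, f k := hw
  push_cast
  linarith

/-- If no fibre of `f` on `s` is a singleton, the image of `s` has at most half its size. -/
theorem two_mul_card_image_le {α β : Type*} [DecidableEq β] (s : Finset α) (f : α → β)
    (h : ∀ a ∈ s, ∃ b ∈ s, b ≠ a ∧ f b = f a) : 2 * #(s.image f) ≤ #s := by
  rw [card_eq_sum_card_image f s, mul_comm, ← smul_eq_mul]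
  refine card_nsmul_le_sum _ _ _ fun b hb => ?_
  obtain ⟨a, ha, rfl⟩ := mem_image.1 hb
  obtain ⟨c, hc, hca, hfc⟩ := h a ha
  exact one_lt_card.2 ⟨c, by simp [hc, hfc], a, by simp [ha], hca⟩

/-- A nonempty set of cells meeting no line in exactly one cell supports a nonzero matrix with
vanishing row and column sums. -/
theorem exists_ne_zero_line_sums_eq_zero {ι κ : Type*} [Fintype ι] [Fintype κ]
    [DecidableEq ι] [DecidableEq κ] (s : Finset (ι × κ)) (hs : s.Nonempty)
    (hrow : ∀ x ∈ s, ∃ y ∈ s, y ≠ x ∧ y.1 = x.1)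
    (hcol : ∀ x ∈ s, ∃ y ∈ s, y ≠ x ∧ y.2 = x.2) :
    ∃ D : ι × κ → ℝ, D ≠ 0 ∧ (∀ x ∉ s, D x = 0) ∧
      (∀ i, ∑ j, D (i, j) = 0) ∧ (∀ j, ∑ i, D (i, j) = 0) := by
  let E : (s → ℝ) →ₗ[ℝ] (ι × κ → ℝ) := Function.ExtendByZero.linearMap ℝ Subtype.val
  have hE_mem (v : s → ℝ) (x : s) : E v x = v x :=
    Subtype.val_injective.extend_apply v 0 x
  have hE_notMem (v : s → ℝ) (x : ι × κ) (hx : x ∉ s) : E v x = 0 :=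
    Function.extend_apply' (f := Subtype.val) v (0 : ι × κ → ℝ) x
      (by rintro ⟨a, rfl⟩; exact hx a.2)
  let R : (ι × κ → ℝ) →ₗ[ℝ] (s.image Prod.fst → ℝ) :=
    LinearMap.pi fun i => ∑ j, LinearMap.proj (i.1, j)
  let C : (ι × κ → ℝ) →ₗ[ℝ] (s.image Prod.snd → ℝ) :=
    LinearMap.pi fun j => ∑ i, LinearMap.proj (i, j.1)
  have hR (D : ι × κ → ℝ) (i) : R D i = ∑ j, D (i.1, j) := by simp [R]
  have hC (D : ι × κ → ℝ) (j) : C D j = ∑ i, D (i, j.1) := by simp [C]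
  have hrow_zero (v : s → ℝ) (i : ι) (hi : i ∉ s.image Prod.fst) : ∑ j, E v (i, j) = 0 :=
    sum_eq_zero fun j _ => hE_notMem v _ fun h => hi (mem_image_of_mem Prod.fst h)
  have hcol_zero (v : s → ℝ) (j : κ) (hj : j ∉ s.image Prod.snd) : ∑ i, E v (i, j) = 0 :=
    sum_eq_zero fun i _ => hE_notMem v _ fun h => hj (mem_image_of_mem Prod.snd h)
  let L := (R.prod C).comp E
  have hL : ¬ Function.Injective L := by
    intro hinj
    have hle := LinearMap.finrank_le_finrank_of_injective hinj
    have h₁ := two_mul_card_image_le s Prod.fst hrow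
    have h₂ := two_mul_card_image_le s Prod.snd hcol
    have hdim : Module.finrank ℝ (s → ℝ) =
        Module.finrank ℝ ((s.image Prod.fst → ℝ) × (s.image Prod.snd → ℝ)) := by
      refine le_antisymm hle ?_
      simp only [Module.finrank_prod, Module.finrank_fintype_fun_eq_card, Fintype.card_coe]
      omega
    have hsurj := (LinearMap.injective_iff_surjective_of_finrank_eq_finrank hdim).1 hinj
    obtain ⟨x, hx⟩ := hs
    obtain ⟨v, hv⟩ := hsurj (Pi.single ⟨x.1, mem_image_of_mem _ hx⟩ 1, 0)
    have hRv : R (E v) = Pi.single ⟨x.1, mem_image_of_mem _ hx⟩ 1 := congrArg Prod.fst hv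
    have hCv : C (E v) = 0 := congrArg Prod.snd hv
    have hrows : ∑ i, ∑ j, E v (i, j) = 1 := by
      rw [← sum_subset (subset_univ (s.image Prod.fst)) fun i _ hi => hrow_zero v i hi,
        ← sum_coe_sort]
      simp_rw [← hR, hRv]
      simp
    have hcols : ∑ j, ∑ i, E v (i, j) = 0 := by
      refine sum_eq_zero fun j _ => ?_
      by_cases hj : j ∈ s.image Prod.snd
      · rw [← hC (E v) ⟨j, hj⟩, hCv, Pi.zero_apply]
      · exact hcol_zero v j hj
    rw [sum_comm, hcols] at hrows
    exact zero_ne_one hrows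
  rw [injective_iff_map_eq_zero] at hL
  push Not at hL
  obtain ⟨v, hv, hv0⟩ := hL
  have hRv : R (E v) = 0 := congrArg Prod.fst hv
  have hCv : C (E v) = 0 := congrArg Prod.snd hv
  refine ⟨E v, fun h => hv0 ?_, hE_notMem v, fun i => ?_, fun j => ?_⟩
  · ext x
    rw [← hE_mem v x, h, Pi.zero_apply, Pi.zero_apply]
  · by_cases hi : i ∈ s.image Prod.fst
    · rw [← hR (E v) ⟨i, hi⟩, hRv, Pi.zero_apply]
    · exact hrow_zero v i hi
  · by_cases hj : j ∈ s.image Prod.snd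
    · rw [← hC (E v) ⟨j, hj⟩, hCv, Pi.zero_apply]
    · exact hcol_zero v j hj

/-- The largest step from a non-integer `a` in a nonzero direction `d` within `[⌊a⌋, ⌈a⌉]`. -/
theorem exists_max_step {a d : ℝ} (ha : ¬ ∃ z : ℤ, a = z) (hd : d ≠ 0) :
    ∃ t > 0, (∃ z : ℤ, a + t * d = z) ∧
      ∀ u, 0 ≤ u → u ≤ t → (⌊a⌋ : ℝ) ≤ a + u * d ∧ a + u * d ≤ ⌈a⌉ := by
  have hfloor : (⌊a⌋ : ℝ) < a := (Int.floor_le a).lt_of_ne fun h => ha ⟨_, h.symm⟩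
  have hceil : a < ⌈a⌉ := (Int.le_ceil a).lt_of_ne fun h => ha ⟨_, h⟩
  rcases hd.lt_or_gt with hd | hd
  · refine ⟨(a - ⌊a⌋) / -d, div_pos (by linarith) (by linarith), ⟨⌊a⌋, ?_⟩, fun u hu hut => ?_⟩
    · field_simp
      ring
    · rw [le_div_iff₀ (by linarith)] at hut
      constructor <;> nlinarith
  · refine ⟨(⌈a⌉ - a) / d, div_pos (by linarith) hd, ⟨⌈a⌉, ?_⟩, fun u hu hut => ?_⟩
    · field_simp
      ring
    · rw [le_div_iff₀ hd] at hut
      constructor <;> nlinarith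

/-- Moving a vector in a nonzero direction supported on its non-integer coordinates until the first
one becomes an integer. -/
theorem exists_step_ncard_lt {α : Type*} [Fintype α] (A D : α → ℝ) (hD : D ≠ 0)
    (hsupp : ∀ x, (∃ z : ℤ, A x = z) → D x = 0) :
    ∃ t > 0, (∀ x, (⌊A x⌋ : ℝ) ≤ A x + t * D x ∧ A x + t * D x ≤ ⌈A x⌉) ∧
      {x | ¬ ∃ z : ℤ, A x + t * D x = z}.ncard < {x | ¬ ∃ z : ℤ, A x = z}.ncard := by
  classical
  have hfrac (x : α) (hx : D x ≠ 0) : ¬ ∃ z : ℤ, A x = z := fun h => hx (hsupp x h)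
  have hstep (x : α) (hx : D x ≠ 0) := exists_max_step (hfrac x hx) hx
  choose! τ hτpos hτint hτbd using hstep
  have hne : (univ.filter fun x => D x ≠ 0).Nonempty := by
    obtain ⟨x, hx⟩ := Function.ne_iff.1 hD
    exact ⟨x, by simpa using hx⟩
  obtain ⟨x₀, hx₀, hmin⟩ := exists_min_image _ τ hne
  replace hx₀ : D x₀ ≠ 0 := by simpa using hx₀
  refine ⟨τ x₀, hτpos x₀ hx₀, fun x => ?_, Set.ncard_lt_ncard ?_ (Set.toFinite _)⟩
  · by_cases hx : D x = 0
    · simp [hx, Int.floor_le, Int.le_ceil]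
    · exact hτbd x hx _ (hτpos x₀ hx₀).le (hmin x (by simpa using hx))
  · have hsub : {x | ¬ ∃ z : ℤ, A x + τ x₀ * D x = z} ⊆ {x | ¬ ∃ z : ℤ, A x = z} :=
      fun x hx hAx => hx (by simpa [hsupp x hAx] using hAx)
    exact (Set.ssubset_iff_of_subset hsub).2
      ⟨x₀, hfrac x₀ hx₀, fun h => h (hτint x₀ hx₀)⟩

/-- Decomposition step of the cycle-adjustment rounding
algorithm: a real matrix with integer row and column sums and at least one
non-integer entry is a convex combination of two matrices with the same row and
column sums, entrywise between the floors and ceilings of the original entries,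
each having strictly fewer non-integer entries. -/
theorem decomposition_step
    (m n : ℕ) (A : Fin m → Fin n → ℝ)
    (hrow : ∀ i, ∃ z : ℤ, ∑ j, A i j = z)
    (hcol : ∀ j, ∃ z : ℤ, ∑ i, A i j = z)
    (hfrac : ∃ i j, ¬ ∃ z : ℤ, A i j = z) :
    ∃ (β : ℝ) (B C : Fin m → Fin n → ℝ),
      0 < β ∧ β < 1 ∧
      (∀ i j, A i j = β * B i j + (1 - β) * C i j) ∧
      (∀ i, ∑ j, B i j = ∑ j, A i j) ∧ (∀ i, ∑ j, C i j = ∑ j, A i j) ∧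
      (∀ j, ∑ i, B i j = ∑ i, A i j) ∧ (∀ j, ∑ i, C i j = ∑ i, A i j) ∧
      (∀ i j, (⌊A i j⌋ : ℝ) ≤ B i j ∧ B i j ≤ (⌈A i j⌉ : ℝ)) ∧
      (∀ i j, (⌊A i j⌋ : ℝ) ≤ C i j ∧ C i j ≤ (⌈A i j⌉ : ℝ)) ∧
      {x : Fin m × Fin n | ¬ ∃ z : ℤ, B x.1 x.2 = z}.ncard
        < {x : Fin m × Fin n | ¬ ∃ z : ℤ, A x.1 x.2 = z}.ncard ∧
      {x : Fin m × Fin n | ¬ ∃ z : ℤ, C x.1 x.2 = z}.ncard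
        < {x : Fin m × Fin n | ¬ ∃ z : ℤ, A x.1 x.2 = z}.ncard := by
  classical
  let s : Finset (Fin m × Fin n) := univ.filter fun x => ¬ ∃ z : ℤ, A x.1 x.2 = z
  have hmem (x : Fin m × Fin n) : x ∈ s ↔ ¬ ∃ z : ℤ, A x.1 x.2 = z := by simp [s]
  obtain ⟨D, hD, hsupp, hDrow, hDcol⟩ := exists_ne_zero_line_sums_eq_zero s
    (by obtain ⟨i, j, h⟩ := hfrac; exact ⟨(i, j), (hmem _).2 h⟩)
    (by
      rintro ⟨i, j⟩ hx
      obtain ⟨k, hk, h⟩ := exists_ne_not_int_of_sum_int (A i) (hrow i) ((hmem _).1 hx)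
      exact ⟨(i, k), (hmem _).2 h, by simpa using hk, rfl⟩)
    (by
      rintro ⟨i, j⟩ hx
      obtain ⟨k, hk, h⟩ :=
        exists_ne_not_int_of_sum_int (fun k => A k j) (hcol j) ((hmem _).1 hx)
      exact ⟨(k, j), (hmem _).2 h, by simpa using hk, rfl⟩)
  have hsupp' (x : Fin m × Fin n) (hx : ∃ z : ℤ, A x.1 x.2 = z) : D x = 0 :=
    hsupp x fun h => (hmem x).1 h hx
  obtain ⟨t, ht, htbd, htcard⟩ := exists_step_ncard_lt (fun x => A x.1 x.2) D hD hsupp'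
  obtain ⟨u, hu, hubd, hucard⟩ := exists_step_ncard_lt (fun x => A x.1 x.2) (-D)
    (neg_ne_zero.2 hD) (fun x hx => by simp [hsupp' x hx])
  refine ⟨u / (t + u), fun i j => A i j + t * D (i, j), fun i j => A i j + u * (-D) (i, j),
    by positivity, (div_lt_one (by positivity)).2 (by linarith), fun i j => ?_, fun i => ?_,
    fun i => ?_, fun j => ?_, fun j => ?_, fun i j => htbd (i, j), fun i j => hubd (i, j),
    htcard, hucard⟩
  · simp only [Pi.neg_apply]
    field_simp
    ring
  · simp [sum_add_distrib, ← mul_sum, hDrow]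
  · simp [sum_add_distrib, ← mul_sum, hDrow]
  · simp [sum_add_distrib, ← mul_sum, hDcol]
  · simp [sum_add_distrib, ← mul_sum, hDcol]
end

section
/- Consider reservation problems with m = 3 departments, n = 2 categories and reservation scheme α = (1/2, 1/2), over the infinite horizon. There is no deterministic solution that stays within quota: for every deterministic solution R there exist a finite vacancy sequence (q^1,…,q^t) and a period t such that either some internal entry of R's period-t reservation table lies outside {⌊α_j Q_i^t⌋, ⌈α_j Q_i^t⌉}, or some column total lies outside {⌊α_j ∑_{i∈D} Q_i^t⌋, ⌈α_j ∑_{i∈D} Q_i^t⌉}. -/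
open Finset

/-- With m = 3 departments, n = 2 categories and reservation
scheme α = (1/2, 1/2), no deterministic solution over the infinite horizon stays
within quota: for every deterministic solution (assigning to each finite vacancy
sequence a reservation table, monotonically) there is a vacancy sequence and a
period at which some internal entry or some column total lies outside the floor
and ceiling of its fair share. -/
theorem no_deterministic_solution_within_quota
    (R : (t : ℕ) → (Fin t → Fin 3 → ℕ) → Fin 3 → Fin 2 → ℕ)
    (hrow : ∀ (t : ℕ) (q : Fin t → Fin 3 → ℕ) (i : Fin 3),
      ∑ j, R t q i j = ∑ s, q s i)
    (hmono : ∀ (t : ℕ) (q : Fin (t + 1) → Fin 3 → ℕ) (i : Fin 3) (j : Fin 2),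
      R t (fun s => q s.castSucc) i j ≤ R (t + 1) q i j) :
    ∃ (t : ℕ) (q : Fin t → Fin 3 → ℕ), 1 ≤ t ∧
      ((∃ (i : Fin 3) (j : Fin 2),
          ¬ ((R t q i j : ℤ) = ⌊(1 / 2 : ℝ) * ((∑ s, q s i : ℕ) : ℝ)⌋ ∨
             (R t q i j : ℤ) = ⌈(1 / 2 : ℝ) * ((∑ s, q s i : ℕ) : ℝ)⌉)) ∨
       (∃ j : Fin 2,
          ¬ (((∑ i, R t q i j : ℕ) : ℤ) = ⌊(1 / 2 : ℝ) * ((∑ i, ∑ s, q s i : ℕ) : ℝ)⌋ ∨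
             ((∑ i, R t q i j : ℕ) : ℤ) = ⌈(1 / 2 : ℝ) * ((∑ i, ∑ s, q s i : ℕ) : ℝ)⌉))) := by
  by_contra hcon
  push Not at hcon
  -- First one vacancy in every department, then a second one in department `k` only.
  let q : Fin 3 → Fin 2 → Fin 3 → ℕ := fun k => ![fun _ => 1, Pi.single k 1]
  have hinit : ∀ k, (fun s : Fin 1 => q k s.castSucc) = fun _ _ => 1 := by
    intro k
    funext s i
    fin_cases s
    rfl
  have hrow₁ := hrow 1 fun _ _ => 1
  have hle : ∀ k i j, R 1 (fun _ _ => 1) i j ≤ R 2 (q k) i j := by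
    intro k i j
    simpa only [hinit] using hmono 1 (q k) i j
  have hrow₂ : ∀ k i, R 2 (q k) i 0 + R 2 (q k) i 1 = 1 + Pi.single (M := fun _ => ℕ) k 1 i := by
    intro k i
    simpa [Fin.sum_univ_two, q] using hrow 2 (q k) i
  have hentry : ∀ k, R 2 (q k) k 0 = 1 := by
    intro k
    have h := (hcon 2 (q k) (by norm_num)).1 k 0
    norm_num [Fin.sum_univ_two, q] at h
    exact_mod_cast h
  have hcol : ∀ k, R 2 (q k) 0 0 + R 2 (q k) 1 0 + R 2 (q k) 2 0 = 2 := by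
    intro k
    have h := (hcon 2 (q k) (by norm_num)).2 0
    have htotal : ∑ i, ∑ s, q k s i = 4 := by
      fin_cases k <;> rfl
    rw [htotal] at h
    norm_num [Fin.sum_univ_three] at h
    exact_mod_cast h
  -- Departments other than `k` keep their tables, so any two of them serve different categories.
  have hkeep : ∀ k i, i ≠ k → R 2 (q k) i 0 = R 1 (fun _ _ => 1) i 0 := by
    intro k i hik
    have h₁ := hrow₁ i
    have h₂ := hrow₂ k i
    have hle₀ := hle k i 0
    have hle₁ := hle k i 1
    simp [Fin.sum_univ_two] at h₁
    simp [hik] at h₂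
    omega
  have h₀ := hcol 0
  have h₁ := hcol 1
  have h₂ := hcol 2
  rw [hentry, hkeep 0 1 (by decide), hkeep 0 2 (by decide)] at h₀
  rw [hentry, hkeep 1 0 (by decide), hkeep 1 2 (by decide)] at h₁
  rw [hentry, hkeep 2 0 (by decide), hkeep 2 1 (by decide)] at h₂
  omega
end

section
/- Consider reservation problems with m = 3 departments, n = 2 categories and reservation scheme α = (1/2, 1/2), over the infinite horizon. For every deterministic solution R that stays within university quota and every constant b > 0, there exist a finite vacancy sequence (q^1,…,q^t), a period t, a department i and a category j such that the bias |z_{ij} − α_j·Q_i^t| > b, where z_{ij} is the corresponding entry of R's period-t reservation table. In other words, no deterministic solution can both have a finite bias and stay within university quota. -/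
open Finset

/-- When the cumulative number of vacancies is even, staying within university quota forces
the two columns to be equal. -/
lemma column_sum_eq_of_total_even
    {R : (t : ℕ) → (Fin t → Fin 3 → ℕ) → Fin 3 → Fin 2 → ℕ}
    (huniv : ∀ (t : ℕ) (q : Fin t → Fin 3 → ℕ) (j : Fin 2),
      ((∑ i, R t q i j : ℕ) : ℤ) = ⌊(1 / 2 : ℝ) * ((∑ i, ∑ s, q s i : ℕ) : ℝ)⌋ ∨
      ((∑ i, R t q i j : ℕ) : ℤ) = ⌈(1 / 2 : ℝ) * ((∑ i, ∑ s, q s i : ℕ) : ℝ)⌉)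
    {t : ℕ} {q : Fin t → Fin 3 → ℕ} {N : ℕ} (hN : ∑ i, ∑ s, q s i = 2 * N) (j : Fin 2) :
    R t q 0 j + R t q 1 j + R t q 2 j = N := by
  have hhalf : (1 / 2 : ℝ) * ((2 * N : ℕ) : ℝ) = ((N : ℤ) : ℝ) := by
    push_cast
    ring
  have h := huniv t q j
  rw [hN, hhalf, Int.floor_intCast, Int.ceil_intCast, or_self, Fin.sum_univ_three] at h
  exact_mod_cast h

/-- Announcing a single new vacancy in department `k` leaves every other row unchanged and adds
one unit to row `k`. -/
lemma exists_extend_single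
    {R : (t : ℕ) → (Fin t → Fin 3 → ℕ) → Fin 3 → Fin 2 → ℕ}
    (hrow : ∀ (t : ℕ) (q : Fin t → Fin 3 → ℕ) (i : Fin 3),
      ∑ j, R t q i j = ∑ s, q s i)
    (hmono : ∀ (t : ℕ) (q : Fin (t + 1) → Fin 3 → ℕ) (i : Fin 3) (j : Fin 2),
      R t (fun s => q s.castSucc) i j ≤ R (t + 1) q i j)
    {t : ℕ} (q : Fin t → Fin 3 → ℕ) (k : Fin 3) :
    ∃ q' : Fin (t + 1) → Fin 3 → ℕ,
      ∑ i, ∑ s, q' s i = ∑ i, ∑ s, q s i + 1 ∧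
      (∀ i j, R t q i j ≤ R (t + 1) q' i j) ∧
      ∀ i, R (t + 1) q' i 0 + R (t + 1) q' i 1 =
        R t q i 0 + R t q i 1 + if i = k then 1 else 0 := by
  have hsum (i : Fin 3) : ∑ s, (Fin.snoc q (Pi.single k 1) : Fin (t + 1) → Fin 3 → ℕ) s i =
      ∑ s, q s i + if i = k then 1 else 0 := by
    simp [Fin.sum_univ_castSucc, Pi.single_apply]
  refine ⟨Fin.snoc q (Pi.single k 1), ?_, fun i j => ?_, fun i => ?_⟩
  · simp only [hsum, Finset.sum_add_distrib]
    simp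
  · simpa using hmono t (Fin.snoc q (Pi.single k 1)) i j
  · have h := hrow (t + 1) (Fin.snoc q (Pi.single k 1)) i
    rw [hsum, ← hrow t q i, Fin.sum_univ_two, Fin.sum_univ_two] at h
    exact h

/-- Give a vacancy to department `1`; if it goes to category `0`, give the next one to
department `2`, otherwise to department `0`. Each such round raises by one the gap between the
category imbalances of departments `0` and `2`. -/
lemma exists_imbalance_gap
    {R : (t : ℕ) → (Fin t → Fin 3 → ℕ) → Fin 3 → Fin 2 → ℕ}
    (hrow : ∀ (t : ℕ) (q : Fin t → Fin 3 → ℕ) (i : Fin 3),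
      ∑ j, R t q i j = ∑ s, q s i)
    (hmono : ∀ (t : ℕ) (q : Fin (t + 1) → Fin 3 → ℕ) (i : Fin 3) (j : Fin 2),
      R t (fun s => q s.castSucc) i j ≤ R (t + 1) q i j)
    (huniv : ∀ (t : ℕ) (q : Fin t → Fin 3 → ℕ) (j : Fin 2),
      ((∑ i, R t q i j : ℕ) : ℤ) = ⌊(1 / 2 : ℝ) * ((∑ i, ∑ s, q s i : ℕ) : ℝ)⌋ ∨
      ((∑ i, R t q i j : ℕ) : ℤ) = ⌈(1 / 2 : ℝ) * ((∑ i, ∑ s, q s i : ℕ) : ℝ)⌉)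
    (N : ℕ) :
    ∃ q : Fin (2 * N) → Fin 3 → ℕ, ∑ i, ∑ s, q s i = 2 * N ∧
      R (2 * N) q 0 0 + R (2 * N) q 2 1 = R (2 * N) q 0 1 + R (2 * N) q 2 0 + N := by
  induction N with
  | zero =>
    have hzero (i : Fin 3) : R 0 (fun _ _ => 0) i 0 = 0 ∧ R 0 (fun _ _ => 0) i 1 = 0 := by
      simpa using hrow 0 (fun _ _ => 0) i
    exact ⟨fun _ _ => 0, by simp, by simp [hzero]⟩
  | succ N ih =>
    obtain ⟨q, htotal, hgap⟩ := ih
    obtain ⟨q', htotal', hle', hrow'⟩ := exists_extend_single hrow hmono q 1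
    obtain ⟨k, hk⟩ : ∃ k : Fin 3,
        (R _ q' 1 0 = R _ q 1 0 + 1 ∧ k = 2) ∨ (R _ q' 1 0 = R _ q 1 0 ∧ k = 0) := by
      have h₀ := hle' 1 0
      have h₁ := hle' 1 1
      have h := hrow' 1
      simp only [if_true] at h
      rcases (by omega : R _ q' 1 0 = R _ q 1 0 + 1 ∨ R _ q' 1 0 = R _ q 1 0) with h | h
      · exact ⟨2, Or.inl ⟨h, rfl⟩⟩
      · exact ⟨0, Or.inr ⟨h, rfl⟩⟩
    obtain ⟨q'', htotal'', hle'', hrow''⟩ := exists_extend_single hrow hmono q' k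
    have hcol := column_sum_eq_of_total_even huniv htotal
    have htotal_succ : ∑ i, ∑ s, q'' s i = 2 * (N + 1) := by omega
    have hcol'' := column_sum_eq_of_total_even huniv htotal_succ
    refine ⟨q'', htotal_succ, ?_⟩
    change R (2 * N + 1 + 1) q'' 0 0 + R (2 * N + 1 + 1) q'' 2 1 =
      R (2 * N + 1 + 1) q'' 0 1 + R (2 * N + 1 + 1) q'' 2 0 + (N + 1)
    simp only [Fin.forall_fin_succ, IsEmpty.forall_iff] at hle' hrow' hle'' hrow'' hcol hcol''
    rcases hk with ⟨hk, rfl⟩ | ⟨hk, rfl⟩ <;>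
      simp at hle' hrow' hle'' hrow'' hcol hcol'' <;> omega

/-- With m = 3 departments, n = 2 categories and reservation
scheme α = (1/2, 1/2), every deterministic solution over the infinite horizon
that stays within university quota fails to have a finite bias: for every b > 0
there are a vacancy sequence, a period, a department and a category at which the
reservation table entry deviates from the fair share by more than b. -/
theorem university_quota_implies_unbounded_bias
    (R : (t : ℕ) → (Fin t → Fin 3 → ℕ) → Fin 3 → Fin 2 → ℕ)
    (hrow : ∀ (t : ℕ) (q : Fin t → Fin 3 → ℕ) (i : Fin 3),
      ∑ j, R t q i j = ∑ s, q s i)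
    (hmono : ∀ (t : ℕ) (q : Fin (t + 1) → Fin 3 → ℕ) (i : Fin 3) (j : Fin 2),
      R t (fun s => q s.castSucc) i j ≤ R (t + 1) q i j)
    (huniv : ∀ (t : ℕ) (q : Fin t → Fin 3 → ℕ) (j : Fin 2),
      ((∑ i, R t q i j : ℕ) : ℤ) = ⌊(1 / 2 : ℝ) * ((∑ i, ∑ s, q s i : ℕ) : ℝ)⌋ ∨
      ((∑ i, R t q i j : ℕ) : ℤ) = ⌈(1 / 2 : ℝ) * ((∑ i, ∑ s, q s i : ℕ) : ℝ)⌉) :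
    ∀ b : ℝ, 0 < b →
      ∃ (t : ℕ) (q : Fin t → Fin 3 → ℕ) (i : Fin 3) (j : Fin 2), 1 ≤ t ∧
        b < |((R t q i j : ℕ) : ℝ) - (1 / 2 : ℝ) * ((∑ s, q s i : ℕ) : ℝ)| := by
  intro b hb
  obtain ⟨N, hN⟩ := exists_nat_gt (4 * b)
  obtain ⟨q, -, hgap⟩ := exists_imbalance_gap hrow hmono huniv N
  have hN_pos : 0 < N := by
    have : (0 : ℝ) < N := by linarith
    exact_mod_cast this
  have hbias (i : Fin 3) : ((R (2 * N) q i 0 : ℕ) : ℝ) - (1 / 2 : ℝ) * ((∑ s, q s i : ℕ) : ℝ) =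
      ((R (2 * N) q i 0 : ℝ) - R (2 * N) q i 1) / 2 := by
    rw [← hrow, Fin.sum_univ_two]
    push_cast
    ring
  have hgap_real : (R (2 * N) q 0 0 + R (2 * N) q 2 1 : ℝ) =
      R (2 * N) q 0 1 + R (2 * N) q 2 0 + N := by
    exact_mod_cast hgap
  by_contra! hbound
  have h₀ := hbound (2 * N) q 0 0 (by omega)
  have h₂ := hbound (2 * N) q 2 0 (by omega)
  rw [hbias, abs_le] at h₀ h₂
  linarith [h₀.2, h₂.1]
end

section
/- Let C be a finite set of categories with |C| ≥ 2, let α : C → (0,1) satisfy ∑_{j∈C} α_j = 1, and let K ∈ ℕ. Then there exists a finitely supported probability distribution over rosters σ : {1,…,K} → C such that, writing N_j(k) = #{ i ≤ k : σ(i) = j } for the number of positions among the first k assigned to category j: (i) almost surely N_j(k) ∈ {⌊k·α_j⌋, ⌈k·α_j⌉} for every k ≤ K and every j ∈ C; and (ii) E[N_j(k)] = k·α_j for every k ≤ K and every j ∈ C. -/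
open Finset

section Flow

variable {E V : Type*} [Fintype E] [DecidableEq V]

/-- The net inflow at each vertex of a flow on the directed graph whose edge `e` runs from `s e`
to `t e`. -/
noncomputable def netInflow (s t : E → V) : (E → ℝ) →ₗ[ℝ] (V → ℝ) where
  toFun g v := ∑ e with t e = v, g e - ∑ e with s e = v, g e
  map_add' g h := by
    ext v
    simp only [Pi.add_apply, sum_add_distrib]
    ring
  map_smul' c g := by
    ext v
    simp only [Pi.smul_apply, smul_eq_mul, RingHom.id_apply, ← mul_sum]
    ring

lemma netInflow_apply (s t : E → V) (g : E → ℝ) (v : V) :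
    netInflow s t g v = ∑ e with t e = v, g e - ∑ e with s e = v, g e := rfl

lemma sum_mul_netInflow [Fintype V] (s t : E → V) (g : E → ℝ) (φ : V → ℝ) :
    ∑ v, φ v * netInflow s t g v = ∑ e, g e * (φ (t e) - φ (s e)) := by
  simp only [netInflow_apply, sum_filter, mul_sub, mul_sum, sum_sub_distrib, mul_ite, mul_zero]
  congr 1 <;> rw [sum_comm] <;> simp [mul_comm]

/-- A nonempty set of edges in which no vertex has degree one supports a nonzero circulation. -/
lemma exists_circulation_supported [DecidableEq E] [Fintype V] (s t : E → V) (F : Finset E)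
    (hF : F.Nonempty)
    (hdeg : ∀ v ∈ F.image s ∪ F.image t, 2 ≤ #{e ∈ F | s e = v} + #{e ∈ F | t e = v}) :
    ∃ d : E → ℝ, d ≠ 0 ∧ (∀ e ∉ F, d e = 0) ∧ netInflow s t d = 0 := by
  set W := F.image s ∪ F.image t
  have hcard : #W ≤ #F := by
    have hs : #F = ∑ v ∈ W, #{e ∈ F | s e = v} :=
      card_eq_sum_card_fiberwise fun e he => mem_union_left _ (mem_image_of_mem s he)
    have ht : #F = ∑ v ∈ W, #{e ∈ F | t e = v} :=
      card_eq_sum_card_fiberwise fun e he => mem_union_right _ (mem_image_of_mem t he)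
    have h := sum_le_sum hdeg
    rw [sum_add_distrib, ← hs, ← ht, sum_const, smul_eq_mul] at h
    lia
  obtain ⟨e₀, he₀⟩ := hF
  have hv₀ : s e₀ ∈ W := mem_union_left _ (mem_image_of_mem s he₀)
  -- Conservation at one vertex is implied by conservation at all the others.
  let L : (E → ℝ) →ₗ[ℝ] ((W.erase (s e₀) : Finset V) → ℝ) × ((Fᶜ : Finset E) → ℝ) :=
    ((LinearMap.funLeft ℝ ℝ Subtype.val).comp (netInflow s t)).prod
      (LinearMap.funLeft ℝ ℝ Subtype.val)
  have hker : LinearMap.ker L ≠ ⊥ := by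
    apply LinearMap.ker_ne_bot_of_finrank_lt
    simp only [Module.finrank_prod, Module.finrank_fintype_fun_eq_card, Fintype.card_coe,
      card_compl, card_erase_of_mem hv₀]
    have h₁ : #F ≤ Fintype.card E := card_le_univ F
    have h₂ : 0 < #W := card_pos.2 ⟨_, hv₀⟩
    lia
  obtain ⟨d, hd, hd0⟩ := (Submodule.ne_bot_iff _).1 hker
  have hsupp : ∀ e ∉ F, d e = 0 := fun e he =>
    congrFun (congrArg Prod.snd (LinearMap.mem_ker.1 hd)) ⟨e, mem_compl.2 he⟩
  have hcons : ∀ v, v ≠ s e₀ → netInflow s t d v = 0 := by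
    intro v hv
    by_cases hvW : v ∈ W
    · exact congrFun (congrArg Prod.fst (LinearMap.mem_ker.1 hd)) ⟨v, mem_erase.2 ⟨hv, hvW⟩⟩
    · rw [netInflow_apply, sum_eq_zero, sum_eq_zero, sub_zero]
      · intro e he
        refine hsupp e fun heF => hvW ?_
        rw [← (mem_filter.1 he).2]
        exact mem_union_left _ (mem_image_of_mem s heF)
      · intro e he
        refine hsupp e fun heF => hvW ?_
        rw [← (mem_filter.1 he).2]
        exact mem_union_right _ (mem_image_of_mem t heF)
  refine ⟨d, hd0, hsupp, funext fun v => ?_⟩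
  by_cases hv : v = s e₀
  · have h := sum_mul_netInflow s t d 1
    simp only [Pi.one_apply, one_mul, sub_self, mul_zero, sum_const_zero] at h
    rwa [sum_eq_single (s e₀) (fun v _ hv => hcons v hv) (by simp), ← hv] at h
  · exact hcons v hv

lemma mem_addSubgroup_of_sum_mem {ι M : Type*} [DecidableEq ι] [AddCommGroup M] (H : AddSubgroup M)
    {A : Finset ι} {f : ι → M} {a : ι} (ha : a ∈ A) (hsum : ∑ i ∈ A, f i ∈ H)
    (h : ∀ i ∈ A, i ≠ a → f i ∈ H) : f a ∈ H := by
  rw [← add_sum_erase A f ha] at hsum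
  exact (H.add_mem_cancel_right
    (H.sum_mem fun i hi => h i (mem_of_mem_erase hi) (ne_of_mem_erase hi))).1 hsum

/-- A vertex with integral net inflow is not incident to exactly one fractional edge. -/
lemma two_le_degree_of_fractional [DecidableEq E] (s t : E → V) (g : E → ℝ) (F : Finset E)
    (hF : ∀ e, e ∈ F ↔ g e ∉ (Int.castAddHom ℝ).range) (v : V)
    (hg : netInflow s t g v ∈ (Int.castAddHom ℝ).range) (hv : v ∈ F.image s ∪ F.image t) :
    2 ≤ #{e ∈ F | s e = v} + #{e ∈ F | t e = v} := by
  have hnF : ∀ e, e ∉ F → g e ∈ (Int.castAddHom ℝ).range := fun e he =>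
    not_not.1 fun h => he ((hF e).2 h)
  have key : ∀ (p q : E → V), (∑ e with q e = v, g e ∈ (Int.castAddHom ℝ).range →
      ∑ e with p e = v, g e ∈ (Int.castAddHom ℝ).range) → v ∈ F.image p →
      2 ≤ #{e ∈ F | p e = v} + #{e ∈ F | q e = v} := by
    intro p q hpq hvp
    obtain ⟨e₀, he₀, rfl⟩ := mem_image.1 hvp
    by_contra! hlt
    have hpos : 0 < #{e ∈ F | p e = p e₀} := card_pos.2 ⟨e₀, by simp [he₀]⟩
    have hone : #{e ∈ F | p e = p e₀} ≤ 1 := by lia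
    have hzero : {e ∈ F | q e = p e₀} = ∅ := card_eq_zero.1 (by lia)
    refine (hF e₀).1 he₀ (mem_addSubgroup_of_sum_mem _ (A := {e | p e = p e₀}) (by simp)
      (hpq (AddSubgroup.sum_mem _ fun e he => hnF e fun heF => ?_))
      fun e he hne => hnF e fun heF => hne ?_)
    · have : e ∈ ({e ∈ F | q e = p e₀} : Finset E) := by simpa [heF] using he
      simp [hzero] at this
    · exact card_le_one.1 hone e (by simpa [heF] using he) e₀ (by simp [he₀])
  rw [netInflow_apply] at hg
  rcases mem_union.1 hv with h | h
  · exact key s t (fun ht => by simpa using sub_mem ht hg) h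
  · rw [add_comm]
    exact key t s (fun hs => by simpa using add_mem hg hs) h

/-- A flow with integral net inflows is a convex combination of integral flows that have the same
net inflows and round its value on each edge up or down. -/
lemma mem_convexHull_integral_flows [Fintype V] (s t : E → V) (f : E → ℝ)
    (hf : ∀ v, netInflow s t f v ∈ (Int.castAddHom ℝ).range) :
    f ∈ convexHull ℝ {g : E → ℝ | netInflow s t g = netInflow s t f ∧
      ∃ z : E → ℤ, (∀ e, g e = z e) ∧ ∀ e, ⌊f e⌋ ≤ z e ∧ z e ≤ ⌈f e⌉} := by
  classical
  set T := {g : E → ℝ | netInflow s t g = netInflow s t f ∧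
      ∃ z : E → ℤ, (∀ e, g e = z e) ∧ ∀ e, ⌊f e⌋ ≤ z e ∧ z e ≤ ⌈f e⌉}
  let lo : E → ℝ := fun e => ⌊f e⌋
  let hi : E → ℝ := fun e => ⌈f e⌉
  set P := Set.Icc lo hi ∩ {g | netInflow s t g = netInflow s t f}
  have hTfin : T.Finite := by
    refine ((Set.finite_Icc (fun e => ⌊f e⌋) (fun e => ⌈f e⌉)).image
      fun (z : E → ℤ) e => (z e : ℝ)).subset ?_
    rintro g ⟨-, z, hgz, hz⟩
    exact ⟨z, ⟨fun e => (hz e).1, fun e => (hz e).2⟩, funext fun e => (hgz e).symm⟩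
  have hPcompact : IsCompact P := isCompact_Icc.inter_right <|
    isClosed_eq (netInflow s t).continuous_of_finiteDimensional continuous_const
  have hPconvex : Convex ℝ P := (convex_Icc lo hi).inter <|
    (convex_singleton (netInflow s t f)).linear_preimage (netInflow s t)
  have hext : P.extremePoints ℝ ⊆ T := by
    intro g hg
    obtain ⟨⟨⟨hlo, hhi⟩, hnet⟩, hextr⟩ := mem_extremePoints.1 hg
    let F : Finset E := {e | g e ∉ (Int.castAddHom ℝ).range}
    rcases F.eq_empty_or_nonempty with hF | hF
    · have hint : ∀ e, ∃ z : ℤ, g e = z := by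
        intro e
        have he : e ∉ F := by simp [hF]
        simp only [F, mem_filter, mem_univ, true_and, not_not] at he
        obtain ⟨z, hz⟩ := he
        exact ⟨z, by simpa using hz.symm⟩
      choose z hz using hint
      refine ⟨hnet, z, hz, fun e => ⟨?_, ?_⟩⟩
      · have := hlo e
        rw [hz e] at this
        exact Int.cast_le.1 this
      · have := hhi e
        rw [hz e] at this
        exact Int.cast_le.1 this
    · exfalso
      obtain ⟨d, hd0, hsupp, hd⟩ := exists_circulation_supported s t F hF fun v hv =>
        two_le_degree_of_fractional s t g F (by simp [F]) v
          (by rw [show netInflow s t g = _ from hnet]; exact hf v) hv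
      have hev : ∀ c : ℝ, ∀ᶠ ε in nhdsWithin (0 : ℝ) (Set.Ioi 0), g + (ε * c) • d ∈ P := by
        intro c
        have hbox : ∀ e, ∀ᶠ ε in nhdsWithin (0 : ℝ) (Set.Ioi 0),
            g e + ε * c * d e ∈ Set.Icc (lo e) (hi e) := by
          intro e
          by_cases he : e ∈ F
          · have hne : ∀ z : ℤ, (z : ℝ) ≠ g e := fun z hz => (mem_filter.1 he).2 ⟨z, hz⟩
            have hcont : Continuous fun ε : ℝ => g e + ε * c * d e := by fun_prop
            have hmem : Set.Icc (lo e) (hi e) ∈ nhds (g e + 0 * c * d e) := by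
              rw [zero_mul, zero_mul, add_zero]
              exact Icc_mem_nhds (lt_of_le_of_ne (hlo e) (hne _))
                (lt_of_le_of_ne (hhi e) (hne _).symm)
            exact (hcont.tendsto 0).mono_left nhdsWithin_le_nhds hmem
          · simp [hsupp e he, hlo e, hhi e]
        filter_upwards [Filter.eventually_all.2 hbox] with ε hε
        refine ⟨⟨fun e => (hε e).1, fun e => (hε e).2⟩, ?_⟩
        change netInflow s t (g + (ε * c) • d) = netInflow s t f
        rw [map_add, map_smul, hd, smul_zero, add_zero]
        exact hnet
      obtain ⟨ε, ⟨h₁, h₂⟩, hε⟩ :=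
        (((hev 1).and (hev (-1))).and self_mem_nhdsWithin).exists
      have hseg : g ∈ openSegment ℝ (g + (ε * 1) • d) (g + (ε * -1) • d) :=
        ⟨1 / 2, 1 / 2, by norm_num, by norm_num, by norm_num, by
          ext e
          simp only [Pi.add_apply, Pi.smul_apply, smul_eq_mul]
          ring⟩
      have hεd := (hextr _ h₁ _ h₂ hseg).1
      simp only [mul_one, add_eq_left, smul_eq_zero] at hεd
      exact hεd.elim (ne_of_gt hε) hd0
  have hfP : f ∈ P := ⟨⟨fun e => Int.floor_le _, fun e => Int.le_ceil _⟩, rfl⟩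
  rw [← closure_convexHull_extremePoints hPcompact hPconvex] at hfP
  exact closure_minimal (convexHull_mono hext) (hTfin.isClosed_convexHull (𝕜 := ℝ)) hfP

end Flow

section Roster

variable {C : Type*} {K : ℕ}

/-- Tail of an edge of the roster network: the entry edge `(i, j)` leaves row `i`, and the prefix
edge `(k, j)` leaves cell `(k, j)`. -/
def rosterSrc : (Fin (K + 1) × C) ⊕ (Fin K × C) → Fin (K + 1) ⊕ (Fin (K + 1) × C)
  | .inl e => .inl e.1
  | .inr e => .inr (e.1.castSucc, e.2)

/-- Head of an edge of the roster network: the entry edge `(i, j)` enters cell `(i, j)`, and the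
prefix edge `(k, j)` enters cell `(k + 1, j)`. -/
def rosterTgt : (Fin (K + 1) × C) ⊕ (Fin K × C) → Fin (K + 1) ⊕ (Fin (K + 1) × C)
  | .inl e => .inr e
  | .inr e => .inr (e.1.succ, e.2)

/-- The proportional flow: each position gives `α j` to category `j`, the prefix edges carry the
accumulated entitlements, and the extra last row takes everything back. -/
def rosterFlow (α : C → ℝ) : (Fin (K + 1) × C) ⊕ (Fin K × C) → ℝ
  | .inl e => if (e.1 : ℕ) < K then α e.2 else -(K * α e.2)
  | .inr e => ((e.1 : ℕ) + 1 : ℝ) * α e.2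

lemma sum_rosterFlow_initial_entries (α : C → ℝ) (k : Fin K) (j : C) :
    ∑ i : Fin (K + 1) with i ≤ k.castSucc, rosterFlow α (.inl (i, j)) =
      rosterFlow α (.inr (k, j)) := by
  have h : ∀ i ∈ ({i | i ≤ k.castSucc} : Finset (Fin (K + 1))),
      rosterFlow α (.inl (i, j)) = α j := by
    intro i hi
    have hi' : (i : ℕ) ≤ k := (mem_filter.1 hi).2
    simp [rosterFlow, hi'.trans_lt k.2]
  rw [sum_congr rfl h]
  simp [rosterFlow, filter_ge_eq_Iic]

variable [Fintype C] [DecidableEq C]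

lemma netInflow_roster_row (g : (Fin (K + 1) × C) ⊕ (Fin K × C) → ℝ) (i : Fin (K + 1)) :
    netInflow rosterSrc rosterTgt g (.inl i) = -∑ j, g (.inl (i, j)) := by
  rw [netInflow_apply, sum_filter, sum_filter]
  simp only [Fintype.sum_sum_type, Fintype.sum_prod_type, rosterSrc, rosterTgt]
  rw [sum_comm (s := (univ : Finset (Fin (K + 1))))]
  simp

lemma netInflow_roster_cell (g : (Fin (K + 1) × C) ⊕ (Fin K × C) → ℝ) (i : Fin (K + 1)) (j : C) :
    netInflow rosterSrc rosterTgt g (.inr (i, j)) = g (.inl (i, j)) +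
      ∑ k : Fin K, (if k.succ = i then g (.inr (k, j)) else 0) -
      ∑ k : Fin K, (if k.castSucc = i then g (.inr (k, j)) else 0) := by
  rw [netInflow_apply, sum_filter, sum_filter]
  simp [Fintype.sum_sum_type, Fintype.sum_prod_type, rosterSrc, rosterTgt, ite_and]

lemma netInflow_rosterFlow_mem_range (α : C → ℝ) (hα : ∑ j, α j = 1)
    (v : Fin (K + 1) ⊕ (Fin (K + 1) × C)) :
    netInflow rosterSrc rosterTgt (rosterFlow α) v ∈ (Int.castAddHom ℝ).range := by
  rcases v with i | ⟨i, j⟩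
  · rw [netInflow_roster_row]
    by_cases hi : (i : ℕ) < K
    · exact ⟨-1, by simp [rosterFlow, hi, hα]⟩
    · exact ⟨K, by simp [rosterFlow, hi, ← mul_sum, hα]⟩
  · suffices h : netInflow rosterSrc rosterTgt (rosterFlow α) (.inr (i, j)) = 0 by
      rw [h]
      exact zero_mem _
    rw [netInflow_roster_cell]
    have hin : ∑ k : Fin K, (if k.succ = i then rosterFlow α (.inr (k, j)) else 0) = i * α j := by
      induction i using Fin.cases with
      | zero => simp [Fin.succ_ne_zero]
      | succ k => simp [rosterFlow]
    rw [hin]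
    induction i using Fin.lastCases with
    | last => simp [rosterFlow, Fin.castSucc_ne_last]
    | cast k =>
      simp [rosterFlow]
      ring

/-- The total net inflow of the cells `(0, j), …, (k, j)` is what their entry edges bring minus what
the prefix edge `(k, j)` takes away. -/
lemma sum_netInflow_initial_cells (g : (Fin (K + 1) × C) ⊕ (Fin K × C) → ℝ) (k : Fin K) (j : C) :
    ∑ i : Fin (K + 1) with i ≤ k.castSucc, netInflow rosterSrc rosterTgt g (.inr (i, j)) =
      ∑ i : Fin (K + 1) with i ≤ k.castSucc, g (.inl (i, j)) - g (.inr (k, j)) := by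
  simp only [netInflow_roster_cell, sum_sub_distrib, sum_add_distrib]
  rw [sum_comm (t := (univ : Finset (Fin K))), sum_comm (t := (univ : Finset (Fin K))),
    add_sub_assoc, ← sum_sub_distrib, sub_eq_add_neg _ (g (.inr (k, j)))]
  congr 1
  rw [sum_eq_single k]
  · simp
  · intro b _ hb
    have : b.succ ≤ k.castSucc ↔ b ≤ k := by
      simp only [Fin.le_def, Fin.val_succ, Fin.val_castSucc]
      have := Fin.val_ne_of_ne hb
      lia
    simp [this]
  · simp

/-- An integral rounding of the proportional flow is the flow of a roster. -/
lemma exists_roster_of_integral_flow (α : C → ℝ) (hα0 : ∀ j, 0 < α j) (hα1 : ∀ j, α j < 1)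
    (hα : ∑ j, α j = 1) (g : (Fin (K + 1) × C) ⊕ (Fin K × C) → ℝ)
    (hg : netInflow rosterSrc rosterTgt g = netInflow rosterSrc rosterTgt (rosterFlow α))
    (z : (Fin (K + 1) × C) ⊕ (Fin K × C) → ℤ) (hgz : ∀ e, g e = z e)
    (hz : ∀ e, ⌊rosterFlow α e⌋ ≤ z e ∧ z e ≤ ⌈rosterFlow α e⌉) :
    ∃ σ : Fin K → C, ∀ (k : Fin K) (j : C),
      ((#{i : Fin K | (i : ℕ) < k + 1 ∧ σ i = j} : ℕ) : ℤ) = z (.inr (k, j)) := by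
  have hnonneg : ∀ (i : Fin K) j, 0 ≤ z (.inl (i.castSucc, j)) := by
    intro i j
    refine le_trans (Int.floor_nonneg.2 ?_) (hz _).1
    simp [rosterFlow, (hα0 j).le]
  have hle : ∀ (i : Fin K) j, z (.inl (i.castSucc, j)) ≤ 1 := by
    intro i j
    refine (hz _).2.trans (Int.ceil_le.2 ?_)
    simp [rosterFlow, (hα1 j).le]
  have hrow : ∀ i : Fin K, ∑ j, z (.inl (i.castSucc, j)) = 1 := by
    intro i
    have h := congrFun hg (.inl i.castSucc)
    simp only [netInflow_roster_row, hgz] at h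
    simp only [rosterFlow, Fin.val_castSucc, i.2, if_true, hα, neg_inj] at h
    exact_mod_cast h
  have hpos : ∀ i : Fin K, ∃ j, z (.inl (i.castSucc, j)) = 1 := by
    intro i
    obtain ⟨j, -, hj⟩ := exists_ne_zero_of_sum_ne_zero ((hrow i).trans_ne one_ne_zero)
    exact ⟨j, le_antisymm (hle i j) (lt_of_le_of_ne (hnonneg i j) hj.symm)⟩
  choose σ hσ using hpos
  have hind : ∀ i j, z (.inl (i.castSucc, j)) = if σ i = j then 1 else 0 := by
    intro i j
    split_ifs with hij
    · rw [← hij, hσ]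
    · have h := hrow i
      rw [← add_sum_erase _ _ (mem_univ (σ i)), hσ, add_eq_left,
        sum_eq_zero_iff_of_nonneg fun j _ => hnonneg i j] at h
      exact h j (mem_erase.2 ⟨Ne.symm hij, mem_univ j⟩)
  refine ⟨σ, fun k j => ?_⟩
  have h := sum_netInflow_initial_cells g k j
  rw [hg, sum_netInflow_initial_cells, sum_rosterFlow_initial_entries, sub_self, eq_comm, sub_eq_zero] at h
  simp only [hgz] at h
  have h' : ∑ i : Fin (K + 1) with i ≤ k.castSucc, z (.inl (i, j)) = z (.inr (k, j)) := by
    exact_mod_cast h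
  rw [← h', sum_filter, Fin.sum_univ_castSucc, if_neg (not_le.2 (Fin.castSucc_lt_last k)),
    add_zero, card_filter]
  push_cast
  refine sum_congr rfl fun i _ => ?_
  rw [hind, ite_and]
  simp only [Fin.le_def, Fin.val_castSucc, Nat.lt_succ_iff]

end Roster

/-- Random roster: for a reservation scheme α on a finite set of
categories and K positions, there is a finitely supported probability
distribution over rosters σ : {1,…,K} → C such that almost surely every prefix
count N_j(k) is the floor or the ceiling of k·α_j, and E[N_j(k)] = k·α_j. -/
theorem random_roster_exists
    (C : Type) [Fintype C] [DecidableEq C] (hC : 2 ≤ Fintype.card C)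
    (α : C → ℝ) (hα0 : ∀ j, 0 < α j) (hα1 : ∀ j, α j < 1)
    (hαsum : ∑ j, α j = 1) (K : ℕ) :
    ∃ (N : ℕ) (p : Fin N → ℝ) (σ : Fin N → Fin K → C),
      (∀ a, 0 ≤ p a) ∧ (∑ a, p a = 1) ∧
      (∀ a, p a ≠ 0 → ∀ k ≤ K, ∀ j : C,
        (((Finset.univ.filter fun i : Fin K => (i : ℕ) < k ∧ σ a i = j).card : ℕ) : ℤ)
            = ⌊(k : ℝ) * α j⌋ ∨
        (((Finset.univ.filter fun i : Fin K => (i : ℕ) < k ∧ σ a i = j).card : ℕ) : ℤ)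
            = ⌈(k : ℝ) * α j⌉) ∧
      (∀ k ≤ K, ∀ j : C,
        ∑ a, p a * (((Finset.univ.filter fun i : Fin K => (i : ℕ) < k ∧ σ a i = j).card : ℕ) : ℝ)
          = (k : ℝ) * α j) := by
  obtain ⟨ι, _, w, y, hw0, hw1, hy, hwy⟩ := mem_convexHull_iff_exists_fintype.1
    (mem_convexHull_integral_flows rosterSrc rosterTgt (rosterFlow (K := K) α)
      (netInflow_rosterFlow_mem_range α hαsum))
  choose hnet z hyz hz using hy
  choose σ hσ using fun a =>
    exists_roster_of_integral_flow α hα0 hα1 hαsum (y a) (hnet a) (z a) (hyz a) (hz a)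
  let φ := (Fintype.equivFin ι).symm
  refine ⟨Fintype.card ι, w ∘ φ, σ ∘ φ, fun a => hw0 _, (φ.sum_comp w).trans hw1, ?_, ?_⟩
  · rintro a - (_ | k) hk j
    · simp
    · have hf : rosterFlow α (.inr ((⟨k, hk⟩ : Fin K), j)) = ((k + 1 : ℕ) : ℝ) * α j := by
        simp [rosterFlow]
      have hcount := hσ (φ a) ⟨k, hk⟩ j
      have hbound := hz (φ a) (.inr (⟨k, hk⟩, j))
      rw [← hcount, hf] at hbound
      have hceil := Int.ceil_le_floor_add_one (((k + 1 : ℕ) : ℝ) * α j)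
      simp only [Function.comp_apply] at hbound ⊢
      lia
  · rintro (_ | k) hk j
    · simp
    · have hcount : ∀ a, ((#{i : Fin K | (i : ℕ) < k + 1 ∧ σ a i = j} : ℕ) : ℝ) =
          y a (.inr (⟨k, hk⟩, j)) := by
        intro a
        rw [hyz, ← hσ a ⟨k, hk⟩ j, Int.cast_natCast]
      simp only [Function.comp_apply, hcount]
      rw [φ.sum_comp fun a => w a * y a (.inr (⟨k, hk⟩, j))]
      have h := congrFun hwy (.inr (⟨k, hk⟩, j))
      simpa [rosterFlow] using h
end

section
/- For every reservation problem over a finite horizon T there exists a lottery solution (a finitely supported probability distribution over monotone sequences (Z^1,…,Z^T) of reservation tables) which is unbiased (E[Z^t_{ij}] = α_j·Q_i^t for all t, i, j), stays within department quota (almost surely Z^t_{ij} ∈ {⌊α_j·Q_i^t⌋, ⌈α_j·Q_i^t⌉} for all t, i, j), and such that the family of random vectors ((Z^t_{ij})_{t ≤ T, j ∈ C})_{i∈D}, indexed by departments i ∈ D, is mutually independent. -/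
open Finset

/-- Period-`t` cumulative vacancy count of department `i`: `Q_i^t = ∑_{s ≤ t} q_i^s`. -/
def cumQ {D : Type} {T : ℕ} (q : Fin T → D → ℕ) (t : Fin T) (i : D) : ℕ :=
  ∑ s ∈ Finset.univ.filter (fun s : Fin T => s ≤ t), q s i

/-- The length of the part of `[l, l + 1]` lying below `y`. -/
noncomputable def seatFill (l : ℕ) (y : ℝ) : ℝ := max 0 (min 1 (y - l))

lemma seatFill_le_one (l : ℕ) (y : ℝ) : seatFill l y ≤ 1 := by
  simp [seatFill]

lemma seatFill_mono (l : ℕ) : Monotone (seatFill l) := by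
  intro x y h
  unfold seatFill
  gcongr

lemma seatFill_eq_zero {l : ℕ} {y : ℝ} (h : y ≤ l) : seatFill l y = 0 :=
  max_eq_left (min_le_of_right_le (by linarith))

lemma seatFill_eq_one {l : ℕ} {y : ℝ} (h : (l : ℝ) + 1 ≤ y) : seatFill l y = 1 := by
  rw [seatFill, min_eq_left (by linarith), max_eq_right zero_le_one]

lemma sum_range_seatFill {y : ℝ} (hy : 0 ≤ y) (L : ℕ) :
    ∑ l ∈ range L, seatFill l y = min y L := by
  induction L with
  | zero => simp [hy]
  | succ L ih =>
    rw [sum_range_succ, ih, Nat.cast_succ]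
    rcases le_total y L with h | h
    · rw [seatFill_eq_zero h, min_eq_left h, min_eq_left (by linarith), add_zero]
    · rcases le_total ((L : ℝ) + 1) y with h' | h'
      · rw [seatFill_eq_one h', min_eq_right h, min_eq_right h']
      · rw [seatFill, min_eq_right h, min_eq_left h', min_eq_right (by linarith),
          max_eq_right (by linarith)]
        ring

lemma sum_fin_seatFill {y : ℝ} {K : ℕ} (hy : 0 ≤ y) (hyK : y ≤ K) :
    ∑ l : Fin K, seatFill l y = y := by
  rw [Fin.sum_univ_eq_sum_range (fun l => seatFill l y), sum_range_seatFill hy, min_eq_left hyK]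

/-- Fractional assignment of slots to seats. The slot `(k, c₀)` is the `k`-th vacancy, every other
slot is a dummy absorbing the seats left unfilled by the first `K` vacancies; the seat `(l, j)` is
the `l`-th seat of category `j`. -/
noncomputable def rosterMatrix {C : Type} [Fintype C] [DecidableEq C] (α : C → ℝ) (K : ℕ) (c₀ : C) :
    Matrix (Fin K × C) (Fin K × C) ℝ := fun x y =>
  if x.2 = c₀ then seatFill y.1 (α y.2 * ((x.1 : ℕ) + 1 : ℕ)) - seatFill y.1 (α y.2 * (x.1 : ℕ))
  else (1 - seatFill y.1 (α y.2 * K)) / (K * (Fintype.card C - 1))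

section Roster

variable {C : Type} [Fintype C] [DecidableEq C] {α : C → ℝ}

lemma sum_rosterMatrix_category (hα0 : ∀ j, 0 < α j) (hα1 : ∀ j, α j < 1) (K : ℕ) (c₀ : C)
    (k : Fin K) (j : C) : ∑ l, rosterMatrix α K c₀ (k, c₀) (l, j) = α j := by
  have hK : ∀ n : ℕ, n ≤ K → ∑ l : Fin K, seatFill l (α j * n) = α j * n := fun n hn =>
    sum_fin_seatFill (mul_nonneg (hα0 j).le n.cast_nonneg)
      ((mul_le_of_le_one_left n.cast_nonneg (hα1 j).le).trans (Nat.cast_le.2 hn))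
  simp only [rosterMatrix, if_true, sum_sub_distrib]
  rw [hK _ k.2, hK _ k.2.le]
  push_cast
  ring

lemma rosterMatrix_mem_doublyStochastic (hC : 2 ≤ Fintype.card C) (hα0 : ∀ j, 0 < α j)
    (hα1 : ∀ j, α j < 1) (hαsum : ∑ j, α j = 1) (K : ℕ) (c₀ : C) :
    rosterMatrix α K c₀ ∈ doublyStochastic ℝ (Fin K × C) := by
  have hC' : (2 : ℝ) ≤ Fintype.card C := by exact_mod_cast hC
  rw [mem_doublyStochastic_iff_sum]
  refine ⟨fun x y => ?_, fun x => ?_, fun y => ?_⟩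
  · unfold rosterMatrix
    split_ifs
    · refine sub_nonneg.2 (seatFill_mono _ ?_)
      have := (hα0 y.2).le
      gcongr
      exact Nat.le_succ _
    · have := seatFill_le_one y.1 (α y.2 * K)
      exact div_nonneg (by linarith) (mul_nonneg K.cast_nonneg (by linarith))
  · obtain ⟨k, c⟩ := x
    rw [Fintype.sum_prod_type_right]
    by_cases hc : c = c₀
    · subst hc
      simp_rw [sum_rosterMatrix_category hα0 hα1, hαsum]
    · have hK : (0 : ℝ) < K := by exact_mod_cast k.pos
      simp only [rosterMatrix, if_neg hc, ← sum_div, sum_sub_distrib]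
      have h : ∀ j, ∑ l : Fin K, seatFill l (α j * K) = α j * K := fun j =>
        sum_fin_seatFill (mul_nonneg (hα0 j).le hK.le)
          (mul_le_of_le_one_left hK.le (hα1 j).le)
      simp_rw [h, ← sum_mul, hαsum]
      rw [div_eq_one_iff_eq (mul_ne_zero hK.ne' (by linarith))]
      simp
      ring
  · obtain ⟨l, j⟩ := y
    have hK : (0 : ℝ) < K := by exact_mod_cast l.pos
    rw [Fintype.sum_prod_type_right, Fintype.sum_eq_add_sum_compl c₀]
    have h₁ : ∑ k, rosterMatrix α K c₀ (k, c₀) (l, j) = seatFill l (α j * K) := by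
      simp only [rosterMatrix, if_true]
      rw [Fin.sum_univ_eq_sum_range
        (fun k => seatFill l (α j * (k + 1 : ℕ)) - seatFill l (α j * k)),
        sum_range_sub (fun k => seatFill l (α j * (k : ℕ)))]
      rw [seatFill_eq_zero (y := α j * (0 : ℕ)) (by simp), sub_zero]
    have h₂ : ∀ c ∈ ({c₀}ᶜ : Finset C), ∑ k, rosterMatrix α K c₀ (k, c) (l, j)
        = (1 - seatFill l (α j * K)) / (Fintype.card C - 1) := by
      intro c hc
      have hc : c ≠ c₀ := by simpa using hc
      simp only [rosterMatrix, if_neg hc]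
      rw [sum_const, card_univ, Fintype.card_fin, nsmul_eq_mul]
      have : (Fintype.card C : ℝ) - 1 ≠ 0 := by linarith
      field_simp
    rw [h₁, sum_congr rfl h₂, sum_const, card_compl, card_singleton, nsmul_eq_mul,
      Nat.cast_sub (by omega), Nat.cast_one, mul_div_cancel₀ _ (by linarith)]
    ring

lemma lt_and_lt_of_rosterMatrix_pos {K : ℕ} {c₀ : C} {k l : Fin K} {j : C}
    (h : 0 < rosterMatrix α K c₀ (k, c₀) (l, j)) :
    α j * (k : ℕ) < (l : ℕ) + 1 ∧ (l : ℕ) < α j * ((k : ℕ) + 1 : ℕ) := by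
  simp only [rosterMatrix, if_true, sub_pos] at h
  constructor <;> by_contra! h'
  · rw [seatFill_eq_one h'] at h
    exact absurd h (seatFill_le_one _ _).not_gt
  · rw [seatFill_eq_zero h'] at h
    exact absurd h (le_max_left _ _).not_gt

lemma lt_of_rosterMatrix_dummy_pos {K : ℕ} {c₀ c : C} (hc : c ≠ c₀) {k l : Fin K} {j : C}
    (h : 0 < rosterMatrix α K c₀ (k, c) (l, j)) : α j * K < (l : ℕ) + 1 := by
  by_contra! h'
  simp [rosterMatrix, hc, seatFill_eq_one h'] at h

end Roster

/-- Birkhoff's theorem entrywise. -/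
lemma exists_perm_weights {n : Type} [Fintype n] [DecidableEq n] {M : Matrix n n ℝ}
    (hM : M ∈ doublyStochastic ℝ n) :
    ∃ w : Equiv.Perm n → ℝ, (∀ σ, 0 ≤ w σ) ∧ ∑ σ, w σ = 1 ∧
      ∀ x y, ∑ σ, (if σ x = y then w σ else 0) = M x y := by
  obtain ⟨w, h0, h1, h⟩ := exists_eq_sum_perm_of_mem_doublyStochastic hM
  refine ⟨w, h0, h1, fun x y => ?_⟩
  rw [← h, Matrix.sum_apply]
  refine sum_congr rfl fun σ _ => ?_
  simp [Equiv.Perm.permMatrix, PEquiv.toMatrix_apply, Equiv.toPEquiv_apply, eq_comm]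

/-- Number of the first `k` positions of the roster `r` assigned to category `j`. -/
def rosterCount {C : Type} [DecidableEq C] (r : ℕ → C) (k : ℕ) (j : C) : ℕ :=
  #{s ∈ range k | r s = j}

lemma sum_rosterCount {C : Type} [Fintype C] [DecidableEq C] (r : ℕ → C) (k : ℕ) :
    ∑ j, rosterCount r k j = k := by
  simpa [rosterCount] using
    (card_eq_sum_card_fiberwise (s := range k) (f := r) (t := univ) (by simp)).symm

lemma rosterCount_mono {C : Type} [DecidableEq C] (r : ℕ → C) (j : C) :
    Monotone fun k => rosterCount r k j := fun _ _ h =>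
  card_le_card (filter_subset_filter _ (range_mono h))

/-- The random-roster construction: a finitely supported distribution over rosters which, up to
position `K`, is unbiased and stays within quota. -/
lemma exists_random_roster {C : Type} [Fintype C] [DecidableEq C] (hC : 2 ≤ Fintype.card C)
    {α : C → ℝ} (hα0 : ∀ j, 0 < α j) (hα1 : ∀ j, α j < 1) (hαsum : ∑ j, α j = 1) (K : ℕ) :
    ∃ (Ω : Type) (_ : Fintype Ω) (w : Ω → ℝ) (r : Ω → ℕ → C),
      (∀ ω, 0 ≤ w ω) ∧ ∑ ω, w ω = 1 ∧
      (∀ ω, w ω ≠ 0 → ∀ k ≤ K, ∀ j, (rosterCount (r ω) k j : ℤ) = ⌊α j * (k : ℝ)⌋ ∨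
        (rosterCount (r ω) k j : ℤ) = ⌈α j * (k : ℝ)⌉) ∧
      (∀ k ≤ K, ∀ j, ∑ ω, w ω * (rosterCount (r ω) k j : ℝ) = α j * k) := by
  obtain ⟨c₀⟩ : Nonempty C := Fintype.card_pos_iff.1 (by omega)
  obtain ⟨w, hw0, hw1, hw⟩ :=
    exists_perm_weights (rosterMatrix_mem_doublyStochastic hC hα0 hα1 hαsum K c₀)
  let r : Equiv.Perm (Fin K × C) → ℕ → C := fun σ k =>
    if h : k < K then (σ (⟨k, h⟩, c₀)).2 else c₀
  have hr : ∀ σ k (h : k < K), r σ k = (σ (⟨k, h⟩, c₀)).2 := fun σ k h => dif_pos h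
  refine ⟨_, inferInstance, w, r, hw0, hw1, fun σ hσ k hk j => ?_, fun k hk j => ?_⟩
  · have hpos : ∀ x, 0 < rosterMatrix α K c₀ x (σ x) := fun x => by
      rw [← hw]
      refine ((hw0 σ).lt_of_ne' hσ).trans_le ?_
      simpa using single_le_sum (f := fun τ => if τ x = σ x then w τ else 0)
        (fun τ _ => by split_ifs <;> simp [hw0]) (mem_univ σ)
    have hlow : ⌊α j * (k : ℝ)⌋₊ ≤ rosterCount (r σ) k j := by
      have hfill : ∀ l ∈ range ⌊α j * (k : ℝ)⌋₊, ∃ s ∈ ({s ∈ range k | r σ s = j} : Finset ℕ),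
          ∃ h : s < K, ((σ (⟨s, h⟩, c₀)).1 : ℕ) = l := by
        intro l hl
        have hl : (l : ℝ) + 1 ≤ α j * k := by
          exact_mod_cast (Nat.le_floor_iff (mul_nonneg (hα0 j).le k.cast_nonneg)).1
            (Nat.succ_le_of_lt (mem_range.1 hl))
        have hkK : α j * k ≤ α j * K := by have := (hα0 j).le; gcongr
        have hlK : l < K := by
          have : α j * K ≤ K := mul_le_of_le_one_left K.cast_nonneg (hα1 j).le
          exact_mod_cast (show (l : ℝ) < K by linarith)
        obtain ⟨⟨s, c⟩, hs⟩ := σ.surjective (⟨l, hlK⟩, j)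
        have hp := hpos (s, c)
        rw [hs] at hp
        obtain rfl : c = c₀ := by
          by_contra hc
          have := lt_of_rosterMatrix_dummy_pos hc hp
          simp only at this
          linarith
        have hsk := (lt_and_lt_of_rosterMatrix_pos hp).1
        have hsk : (s : ℕ) < k := by
          exact_mod_cast lt_of_mul_lt_mul_left (hsk.trans_le hl) (hα0 j).le
        refine ⟨s, ?_, s.2, by simp [hs]⟩
        simp [hsk, hr σ s s.2, hs]
      choose! f hf hfK using hfill
      rw [← card_range ⌊α j * (k : ℝ)⌋₊]
      refine card_le_card_of_injOn f hf fun a ha b hb hab => ?_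
      obtain ⟨_, e⟩ := hfK a ha
      obtain ⟨_, e'⟩ := hfK b hb
      simp only [hab] at e
      exact e.symm.trans e'
    have hup : rosterCount (r σ) k j ≤ ⌈α j * (k : ℝ)⌉₊ := by
      have hseat : ∀ s ∈ ({s ∈ range k | r σ s = j} : Finset ℕ),
          ∃ l ∈ range ⌈α j * (k : ℝ)⌉₊, ∃ (h : s < K) (h' : l < K),
            σ (⟨s, h⟩, c₀) = (⟨l, h'⟩, j) := by
        intro s hs
        obtain ⟨hsk, hsj⟩ := mem_filter.1 hs
        have hsk := mem_range.1 hsk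
        have hsK := hsk.trans_le hk
        rw [hr σ s hsK] at hsj
        have hp := hpos (⟨s, hsK⟩, c₀)
        obtain ⟨l, hl⟩ : ∃ l, σ (⟨s, hsK⟩, c₀) = (l, j) := ⟨_, Prod.ext rfl hsj⟩
        rw [hl] at hp
        refine ⟨l, ?_, hsK, l.2, hl⟩
        rw [mem_range, Nat.lt_ceil]
        refine (lt_and_lt_of_rosterMatrix_pos hp).2.trans_le ?_
        have := (hα0 j).le
        gcongr
        exact hsk
      choose! f hf hfK using hseat
      rw [← card_range ⌈α j * (k : ℝ)⌉₊]
      refine card_le_card_of_injOn f hf fun a ha b hb hab => ?_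
      obtain ⟨h₁, h₂, e⟩ := hfK a ha
      obtain ⟨h₁', h₂', e'⟩ := hfK b hb
      simp only [hab] at e
      simpa using σ.injective (e.trans e'.symm)
    have hnn : 0 ≤ α j * (k : ℝ) := mul_nonneg (hα0 j).le k.cast_nonneg
    have h₁ : ⌊α j * (k : ℝ)⌋ ≤ rosterCount (r σ) k j := by
      rw [← Int.natCast_floor_eq_floor hnn]; exact_mod_cast hlow
    have h₂ : (rosterCount (r σ) k j : ℤ) ≤ ⌈α j * (k : ℝ)⌉ := by
      rw [← Int.natCast_ceil_eq_ceil hnn]; exact_mod_cast hup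
    have h₃ := Int.ceil_le_floor_add_one (α j * (k : ℝ))
    omega
  · have hstep : ∀ s ∈ range k, ∑ σ, w σ * (if r σ s = j then 1 else 0) = α j := by
      intro s hs
      have hsK := (mem_range.1 hs).trans_le hk
      rw [← sum_rosterMatrix_category hα0 hα1 K c₀ ⟨s, hsK⟩ j]
      simp_rw [← hw]
      rw [sum_comm]
      refine sum_congr rfl fun σ _ => ?_
      rw [hr σ s hsK]
      simp only [Prod.ext_iff]
      by_cases h : (σ (⟨s, hsK⟩, c₀)).2 = j <;> simp [h]
    simp only [rosterCount, card_filter, Nat.cast_sum, Nat.cast_ite, Nat.cast_one, Nat.cast_zero,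
      mul_sum]
    rw [sum_comm, sum_congr rfl hstep, sum_const, card_range, nsmul_eq_mul, mul_comm]

section Product

variable {D Ω : Type} [Fintype D] [DecidableEq D] [Fintype Ω] {w : Ω → ℝ}

lemma sum_prod_weight_mul_prod (f : D → Ω → ℝ) :
    ∑ a : D → Ω, (∏ i, w (a i)) * ∏ i, f i (a i) = ∏ i, ∑ ω, w ω * f i ω := by
  simp_rw [← prod_mul_distrib]
  rw [prod_univ_sum, Fintype.piFinset_univ]

lemma sum_prod_weight_mul_apply (hw : ∑ ω, w ω = 1) (i : D) (f : Ω → ℝ) :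
    ∑ a : D → Ω, (∏ i', w (a i')) * f (a i) = ∑ ω, w ω * f ω := by
  have h := sum_prod_weight_mul_prod (w := w) (fun i' ω => if i' = i then f ω else 1)
  simp only [prod_ite_eq', mem_univ, if_true] at h
  rw [h, prod_eq_single i]
  · simp
  · intro b _ hb
    simp [hb, hw]
  · simp

end Product

/-- For every reservation problem over a finite horizon T there
exists a finitely supported lottery over monotone sequences of reservation tables
that is unbiased, stays within department quota almost surely, and under which
the department allocation processes are mutually independent across departments
(the joint probability mass function factorizes over departments). -/
theorem lottery_with_independent_departments
    (D C : Type) [Fintype D] [Fintype C] [DecidableEq D] [DecidableEq C]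
    (hD : 2 ≤ Fintype.card D) (hC : 2 ≤ Fintype.card C)
    (α : C → ℝ) (hα0 : ∀ j, 0 < α j) (hα1 : ∀ j, α j < 1)
    (hαsum : ∑ j, α j = 1)
    (T : ℕ) (q : Fin T → D → ℕ) :
    ∃ (N : ℕ) (p : Fin N → ℝ) (Z : Fin N → Fin T → D → C → ℕ),
      (∀ a, 0 ≤ p a) ∧ (∑ a, p a = 1) ∧
      (∀ a t i, ∑ j, Z a t i j = cumQ q t i) ∧
      (∀ a (t t' : Fin T), t ≤ t' → ∀ i j, Z a t i j ≤ Z a t' i j) ∧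
      (∀ a, p a ≠ 0 → ∀ t i j,
        ((Z a t i j : ℕ) : ℤ) = ⌊α j * ((cumQ q t i : ℕ) : ℝ)⌋ ∨
        ((Z a t i j : ℕ) : ℤ) = ⌈α j * ((cumQ q t i : ℕ) : ℝ)⌉) ∧
      (∀ t i j, ∑ a, p a * ((Z a t i j : ℕ) : ℝ) = α j * ((cumQ q t i : ℕ) : ℝ)) ∧
      (∀ v : D → Fin T → C → ℕ,
        ∑ a ∈ Finset.univ.filter (fun a : Fin N => ∀ i t j, Z a t i j = v i t j), p a
          = ∏ i, ∑ a ∈ Finset.univ.filter (fun a : Fin N => ∀ t j, Z a t i j = v i t j), p a) := by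
  classical
  set K := ∑ i, ∑ s, q s i
  have hQK : ∀ t i, cumQ q t i ≤ K := fun t i =>
    (sum_le_sum_of_subset (filter_subset _ _)).trans
      (single_le_sum (f := fun i => ∑ s, q s i) (fun _ _ => Nat.zero_le _) (mem_univ i))
  obtain ⟨Ω, _, w, r, hw0, hw1, hquota, hmean⟩ :=
    exists_random_roster hC hα0 hα1 hαsum K
  let e : Fin (Fintype.card (D → Ω)) ≃ (D → Ω) := (Fintype.equivFin _).symm
  refine ⟨_, fun a => ∏ i, w (e a i), fun a t i j => rosterCount (r (e a i)) (cumQ q t i) j,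
    fun a => prod_nonneg fun i _ => hw0 _, ?_, fun a t i => sum_rosterCount _ _,
    fun a t t' h i j => rosterCount_mono _ _ ?_,
    fun a ha t i j => hquota _ (prod_ne_zero_iff.1 ha i (mem_univ i)) _ (hQK t i) j,
    fun t i j => ?_, fun v => ?_⟩
  · rw [e.sum_comp fun a => ∏ i, w (a i)]
    simpa [hw1] using sum_prod_weight_mul_prod (D := D) (w := w) fun _ _ => 1
  · exact sum_le_sum_of_subset fun s hs => by
      simp only [mem_filter, mem_univ, true_and] at hs ⊢
      exact hs.trans h
  · rw [e.sum_comp fun a => (∏ i, w (a i)) * (rosterCount (r (a i)) (cumQ q t i) j : ℝ),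
      sum_prod_weight_mul_apply hw1 i fun ω => (rosterCount (r ω) (cumQ q t i) j : ℝ),
      hmean _ (hQK t i)]
  · let f : D → Ω → ℝ := fun i ω =>
      if ∀ t j, rosterCount (r ω) (cumQ q t i) j = v i t j then 1 else 0
    have hmarg : ∀ i, ∑ a with ∀ t j, rosterCount (r (e a i)) (cumQ q t i) j = v i t j,
        ∏ i', w (e a i') = ∑ ω, w ω * f i ω := fun i => by
      rw [← sum_prod_weight_mul_apply hw1 i, sum_filter,
        ← e.sum_comp fun a => (∏ i', w (a i')) * f i (a i)]
      simp [f]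
    simp_rw [hmarg]
    rw [← sum_prod_weight_mul_prod, sum_filter,
      ← e.sum_comp fun a => (∏ i, w (a i)) * ∏ i, f i (a i)]
    refine sum_congr rfl fun a _ => ?_
    simp only [f, prod_ite_zero, prod_const_one, mem_univ, true_imp_iff, mul_ite, mul_one, mul_zero]
end

section
/- For every reservation problem over a finite horizon T there exists a lottery solution (a finitely supported probability distribution over monotone sequences (Z^1,…,Z^T) of reservation tables) which is unbiased (E[Z^t_{ij}] = α_j·Q_i^t for all t, i, j), stays within department quota (almost surely Z^t_{ij} ∈ {⌊α_j·Q_i^t⌋, ⌈α_j·Q_i^t⌉} for all t, i, j), and approximately stays within university quota: for every period t and category j, writing x = α_j·∑_{i∈D} Q_i^t and S = ∑_{i∈D} Z^t_{ij}, if x > 0 then for every b with 0 < b ≤ x one has Pr[S − x ≥ b] ≤ exp(−b²/(3x)), and for every b > 0 one has Pr[S − x ≤ −b] ≤ exp(−b²/(2x)). -/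
open Finset
open scoped Classical

/-- The part of the interval `[0, y]` lying in the `r`-th unit interval `[r, r + 1]`. -/
noncomputable def unitOverlap (r : ℕ) (y : ℝ) : ℝ := max 0 (min 1 (y - r))

lemma unitOverlap_nonneg (r : ℕ) (y : ℝ) : 0 ≤ unitOverlap r y := le_max_left _ _

lemma unitOverlap_le_one (r : ℕ) (y : ℝ) : unitOverlap r y ≤ 1 :=
  max_le zero_le_one (min_le_left _ _)

lemma unitOverlap_mono (r : ℕ) : Monotone (unitOverlap r) := fun _ _ h => by
  unfold unitOverlap; gcongr

lemma unitOverlap_zero (r : ℕ) : unitOverlap r 0 = 0 := by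
  have : (0 : ℝ) ≤ r := r.cast_nonneg
  rw [unitOverlap, max_eq_left]
  exact (min_le_right _ _).trans (by linarith)

lemma unitOverlap_eq_one {r : ℕ} {y : ℝ} (h : (r : ℝ) + 1 ≤ y) : unitOverlap r y = 1 := by
  rw [unitOverlap, min_eq_left (by linarith), max_eq_right zero_le_one]

lemma unitOverlap_eq_zero {r : ℕ} {y : ℝ} (h : y ≤ r) : unitOverlap r y = 0 := by
  rw [unitOverlap, max_eq_left]
  exact (min_le_right _ _).trans (by linarith)

lemma sum_range_unitOverlap {y : ℝ} (hy : 0 ≤ y) (n : ℕ) :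
    ∑ r ∈ range n, unitOverlap r y = min y n := by
  induction n with
  | zero => simp [hy]
  | succ n ih =>
    rw [sum_range_succ, ih, unitOverlap]
    push_cast
    grind

lemma sum_fin_unitOverlap {y : ℝ} {n : ℕ} (hy : 0 ≤ y) (hn : y ≤ n) :
    ∑ r : Fin n, unitOverlap r y = y := by
  rw [Fin.sum_univ_eq_sum_range (fun r => unitOverlap r y), sum_range_unitOverlap hy,
    min_eq_left hn]

/-- In a convex combination equal to an upper bound of its terms, each term of positive weight
attains the bound. -/
lemma eq_of_weighted_sum_eq_of_le {Ω : Type*} [Fintype Ω] {w u : Ω → ℝ} {c : ℝ}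
    (hw : ∀ a, 0 < w a) (hw1 : ∑ a, w a = 1) (hu : ∀ a, u a ≤ c)
    (h : ∑ a, w a * u a = c) (a : Ω) : u a = c := by
  have h0 : ∑ a, w a * (c - u a) = 0 := by
    simp only [mul_sub, sum_sub_distrib, h, ← sum_mul, hw1]; ring
  have := (sum_eq_zero_iff_of_nonneg
    (fun a _ => mul_nonneg (hw a).le (sub_nonneg.2 (hu a)))).1 h0 a (mem_univ a)
  rcases mul_eq_zero.1 this with h | h
  · exact absurd h (hw a).ne'
  · linarith

/-- In a convex combination equal to a lower bound of its terms, each term of positive weight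
attains the bound. -/
lemma eq_of_weighted_sum_eq_of_ge {Ω : Type*} [Fintype Ω] {w u : Ω → ℝ} {c : ℝ}
    (hw : ∀ a, 0 < w a) (hw1 : ∑ a, w a = 1) (hu : ∀ a, c ≤ u a)
    (h : ∑ a, w a * u a = c) (a : Ω) : u a = c := by
  have := eq_of_weighted_sum_eq_of_le (u := fun a => -u a) (c := -c) hw hw1
    (fun a => neg_le_neg (hu a)) (by simp [h]) a
  linarith

/-- A fractional assignment saturating the rows and not overloading the columns is a convex
combination, with positive weights, of integral ones. -/
lemma exists_weighted_injections {R S : Type} [Fintype R] [Fintype S] (X : R → S → ℝ)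
    (h0 : ∀ k c, 0 ≤ X k c) (hrow : ∀ k, ∑ c, X k c = 1) (hcol : ∀ c, ∑ k, X k c ≤ 1) :
    ∃ (Ω : Type) (_ : Fintype Ω) (w : Ω → ℝ) (f : Ω → R → S),
      (∀ a, 0 < w a) ∧ ∑ a, w a = 1 ∧ (∀ a, Function.Injective (f a)) ∧
      ∀ k c, ∑ a, w a * (if f a k = c then 1 else 0) = X k c := by
  set M : Matrix (R ⊕ S) (R ⊕ S) ℝ :=
    Matrix.fromBlocks 0 (Matrix.of X) (Matrix.of X).transpose
      (Matrix.diagonal fun c => 1 - ∑ k, X k c) with hM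
  have hMd : M ∈ doublyStochastic ℝ (R ⊕ S) := by
    rw [mem_doublyStochastic_iff_sum]
    refine ⟨?_, ?_, ?_⟩
    · rintro (i | i) (j | j)
      · simp [hM]
      · simpa [hM] using h0 i j
      · simpa [hM] using h0 j i
      · simp only [hM, Matrix.fromBlocks_apply₂₂, Matrix.diagonal_apply]
        split_ifs
        · linarith [hcol i]
        · rfl
    · rintro (i | i)
      · simp [hM, hrow]
      · simp [hM, Matrix.diagonal_apply]
    · rintro (i | i)
      · simp [hM, hrow]
      · simp [hM, Matrix.diagonal_apply]
  obtain ⟨w, hw0, hw1, hwM⟩ := exists_eq_sum_perm_of_mem_doublyStochastic hMd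
  have hsub : ∀ g : Equiv.Perm (R ⊕ S) → ℝ, (∀ σ, w σ = 0 → g σ = 0) →
      ∑ σ : {σ // w σ ≠ 0}, g σ = ∑ σ, g σ := by
    intro g hg
    rw [← sum_subtype (univ.filter fun σ => w σ ≠ 0) (by simp) g, sum_filter]
    exact sum_congr rfl fun σ _ => by split_ifs with h <;> simp_all
  have hentry : ∀ x y, ∑ σ : {σ // w σ ≠ 0}, w σ * (if σ.1 x = y then 1 else 0) = M x y := by
    intro x y
    rw [← hwM, Matrix.sum_apply, hsub fun σ => w σ * (if σ x = y then 1 else 0)]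
    · simp [Equiv.toPEquiv_apply]
    · intro σ h; simp [h]
  have hw1' : ∑ σ : {σ // w σ ≠ 0}, w σ = 1 := by
    rw [hsub w fun _ h => h, hw1]
  have hpos : ∀ σ : {σ // w σ ≠ 0}, 0 < w σ := fun σ => (hw0 σ).lt_of_ne' σ.2
  have hinr : ∀ (σ : {σ // w σ ≠ 0}) k, ∃ c, σ.1 (Sum.inl k) = Sum.inr c := by
    intro σ k
    rcases h : σ.1 (Sum.inl k) with k' | c
    · have := eq_of_weighted_sum_eq_of_ge hpos hw1' (fun σ => by positivity)
        ((hentry (Sum.inl k) (Sum.inl k')).trans (by simp [hM])) σ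
      simp [h] at this
    · exact ⟨c, rfl⟩
  choose f hf using hinr
  refine ⟨_, inferInstance, fun σ : {σ // w σ ≠ 0} => w σ, f, hpos, hw1', ?_, ?_⟩
  · intro σ k k' h
    have : σ.1 (Sum.inl k) = σ.1 (Sum.inl k') := by rw [hf, hf, h]
    simpa using this
  · intro k c
    simpa [hf, hM] using hentry (Sum.inl k) (Sum.inr c)

/-- A lottery for a single department: filling its vacancies one at a time, it respects the quota
of every category at every size up to `K` and is unbiased. -/
lemma exists_single_department_lottery {C : Type} [Fintype C] (α : C → ℝ) (hα0 : ∀ j, 0 ≤ α j)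
    (hαsum : ∑ j, α j = 1) (K : ℕ) :
    ∃ (Ω : Type) (_ : Fintype Ω) (w : Ω → ℝ) (z : Ω → ℕ → C → ℕ),
      (∀ a, 0 < w a) ∧ ∑ a, w a = 1 ∧ (∀ a j, Monotone fun k => z a k j) ∧
      (∀ a, ∀ k ≤ K, ∑ j, z a k j = k) ∧
      (∀ k ≤ K, ∀ j, ∑ a, w a * (z a k j : ℝ) = α j * k) ∧
      ∀ a, ∀ k ≤ K, ∀ j, (z a k j : ℤ) = ⌊α j * (k : ℝ)⌋ ∨ (z a k j : ℤ) = ⌈α j * (k : ℝ)⌉ := by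
  have hα1 : ∀ j, α j ≤ 1 := fun j =>
    hαsum ▸ single_le_sum (fun i _ => hα0 i) (mem_univ j)
  set X : Fin K → C × Fin K → ℝ := fun k c =>
    unitOverlap c.2 (α c.1 * ((k : ℕ) + 1 : ℕ)) - unitOverlap c.2 (α c.1 * (k : ℕ)) with hX
  have hle : ∀ j, ∀ k ≤ K, α j * (k : ℝ) ≤ K := fun j k hk => by
    have : (k : ℝ) ≤ K := by exact_mod_cast hk
    nlinarith [hα0 j, hα1 j, (k.cast_nonneg : (0 : ℝ) ≤ k)]
  have hprefix : ∀ c, ∀ k ≤ K,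
      ∑ k' with (k' : Fin K).val < k, X k' c = unitOverlap c.2 (α c.1 * k) := by
    intro c k hk
    have e : ∑ k' with (k' : Fin K).val < k, X k' c = ∑ k' ∈ range k,
        (unitOverlap c.2 (α c.1 * (k' + 1 : ℕ)) - unitOverlap c.2 (α c.1 * (k' : ℕ))) := by
      refine sum_bij (fun k' _ => (k' : ℕ)) ?_ ?_ ?_ ?_
      · intro k' hk'; simpa using hk'
      · intro a _ b _ h; exact Fin.ext h
      · intro b hb
        exact ⟨⟨b, (mem_range.1 hb).trans_le hk⟩, by simpa using hb, rfl⟩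
      · intro _ _; rfl
    rw [e, sum_range_sub (fun k' : ℕ => unitOverlap c.2 (α c.1 * k'))]
    simp [unitOverlap_zero]
  obtain ⟨Ω, _, w, f, hw, hw1, hinj, hfX⟩ := exists_weighted_injections X
    (fun k c => sub_nonneg.2 (unitOverlap_mono _ (by
      gcongr
      · exact hα0 _
      · omega)))
    (fun k => by
      rw [Fintype.sum_prod_type]
      simp only [hX, sum_sub_distrib]
      rw [sum_congr rfl fun j _ => sum_fin_unitOverlap
          (mul_nonneg (hα0 j) (Nat.cast_nonneg _)) (hle j (k + 1) (by omega)),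
        sum_congr rfl fun j _ => sum_fin_unitOverlap
          (mul_nonneg (hα0 j) (Nat.cast_nonneg _)) (hle j k (by omega)),
        ← sum_mul, ← sum_mul, hαsum]
      push_cast; ring)
    (fun c => by
      have := hprefix c K le_rfl
      rw [filter_true_of_mem (fun k _ => k.2)] at this
      exact this.trans_le (unitOverlap_le_one _ _))
  -- The number `u a k c` records whether the ticket `c` has been used before time `k`
  set u : Ω → ℕ → C × Fin K → ℕ := fun a k c =>
    #{k' : Fin K | (k' : ℕ) < k ∧ f a k' = c} with hu
  have hu1 : ∀ a k c, u a k c ≤ 1 := fun a k c => card_le_one.2 fun x hx y hy =>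
    hinj a (by simp only [mem_filter] at hx hy; rw [hx.2.2, hy.2.2])
  have huE : ∀ k ≤ K, ∀ c, ∑ a, w a * (u a k c : ℝ) = unitOverlap c.2 (α c.1 * k) := by
    intro k hk c
    rw [← hprefix c k hk]
    simp only [← hfX]
    rw [sum_comm]
    refine sum_congr rfl fun a _ => ?_
    simp only [← mul_sum, hu, ← filter_filter, card_filter _ (filter _ _), Nat.cast_sum,
      Nat.cast_ite, Nat.cast_one, Nat.cast_zero]
    congr!
  refine ⟨Ω, inferInstance, w, fun a k j => ∑ r, u a k (j, r), hw, hw1, ?_, ?_, ?_, ?_⟩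
  · intro a j k k' h
    refine sum_le_sum fun r _ => card_le_card fun x hx => ?_
    simp only [mem_filter] at hx ⊢
    exact ⟨hx.1, hx.2.1.trans_le h, hx.2.2⟩
  · intro a k hk
    rw [← Fintype.sum_prod_type (fun c => u a k c)]
    simp only [hu, ← filter_filter]
    rw [← card_eq_sum_card_fiberwise (fun x _ => mem_univ _)]
    simpa [Fin.card_filter_val_lt] using hk
  · intro k hk j
    push_cast
    simp only [mul_sum]
    rw [sum_comm]
    simp only [huE k hk]
    exact sum_fin_unitOverlap (mul_nonneg (hα0 j) k.cast_nonneg) (hle j k hk)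
  · intro a k hk j
    set y := α j * (k : ℝ)
    have hy : 0 ≤ y := mul_nonneg (hα0 j) k.cast_nonneg
    have hone : ∀ r : Fin K, (r : ℕ) < ⌊y⌋₊ → u a k (j, r) = 1 := fun r hr => by
      have h1 : ((r : ℕ) : ℝ) + 1 ≤ y := by
        exact_mod_cast (Nat.le_floor_iff hy).1 (Nat.succ_le_of_lt hr)
      exact_mod_cast eq_of_weighted_sum_eq_of_le (u := fun a => (u a k (j, r) : ℝ)) hw hw1
        (fun a => by exact_mod_cast hu1 a k _)
        ((huE k hk (j, r)).trans (unitOverlap_eq_one h1)) a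
    have hzero : ∀ r : Fin K, ⌈y⌉₊ ≤ (r : ℕ) → u a k (j, r) = 0 := fun r hr => by
      exact_mod_cast eq_of_weighted_sum_eq_of_ge (u := fun a => (u a k (j, r) : ℝ)) hw hw1
        (fun a => by positivity)
        ((huE k hk (j, r)).trans (unitOverlap_eq_zero (Nat.ceil_le.1 hr))) a
    have hK : ⌈y⌉₊ ≤ K := Nat.ceil_le.2 (hle j k hk)
    have hcount : ∀ n ≤ K, ∑ r : Fin K, (if (r : ℕ) < n then 1 else 0) = n := fun n hn => by
      simpa [Fin.card_filter_val_lt] using hn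
    have hlow : ⌊y⌋₊ ≤ ∑ r, u a k (j, r) := by
      rw [← hcount _ ((Nat.floor_le_ceil y).trans hK)]
      refine sum_le_sum fun r _ => ?_
      split_ifs with h
      · exact (hone r h).ge
      · exact Nat.zero_le _
    have hup : ∑ r, u a k (j, r) ≤ ⌈y⌉₊ := by
      rw [← hcount _ hK]
      refine sum_le_sum fun r _ => ?_
      split_ifs with h
      · exact hu1 _ _ _
      · exact (hzero r (not_lt.1 h)).le
    have := Nat.ceil_le_floor_add_one y
    rw [← Int.natCast_floor_eq_floor hy, ← Int.natCast_ceil_eq_ceil hy]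
    show ((∑ r, u a k (j, r) : ℕ) : ℤ) = _ ∨ ((∑ r, u a k (j, r) : ℕ) : ℤ) = _
    omega

lemma exp_sub_one_sub_le {s : ℝ} (hs : |s| ≤ 1) : Real.exp s - 1 - s ≤ 3 / 4 * s ^ 2 := by
  have := (abs_le.1 (Real.exp_bound hs (n := 2) (by norm_num))).2
  norm_num [sum_range_succ, Nat.factorial] at this
  linarith

lemma exp_neg_le_quadratic {s : ℝ} (hs : 0 ≤ s) : Real.exp (-s) ≤ 1 - s + s ^ 2 / 2 := by
  rw [Real.exp_neg, inv_le_iff_one_le_mul₀ (Real.exp_pos s)]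
  nlinarith [Real.quadratic_le_exp_of_nonneg hs, sq_nonneg (s ^ 2), sq_nonneg (s - 1)]

/-- Moment generating function bound for a centred random variable taking only the two integer
values around its nonnegative mean `μ`. -/
lemma weighted_sum_exp_le {Ω : Type*} [Fintype Ω] {w : Ω → ℝ} {z : Ω → ℕ} {μ : ℝ}
    (hw1 : ∑ a, w a = 1) (hμ : 0 ≤ μ)
    (hE : ∑ a, w a * (z a : ℝ) = μ) (hz : ∀ a, (z a : ℤ) = ⌊μ⌋ ∨ (z a : ℤ) = ⌈μ⌉) (s : ℝ) :
    ∑ a, w a * Real.exp (s * (z a - μ)) ≤ Real.exp (μ * (Real.exp s - 1 - s)) := by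
  have hterm : ∀ a, Real.exp (s * (z a - μ)) =
      Real.exp (s * (⌊μ⌋ - μ)) * (1 + (z a - ⌊μ⌋) * (Real.exp s - 1)) := by
    intro a
    have hcast : (z a : ℝ) = ((z a : ℤ) : ℝ) := by simp
    have hcase : (z a : ℝ) = ⌊μ⌋ ∨ (z a : ℝ) = ⌊μ⌋ + 1 := by
      have h1 := Int.ceil_le_floor_add_one μ
      have h2 := Int.floor_le_ceil μ
      have : (z a : ℤ) = ⌊μ⌋ ∨ (z a : ℤ) = ⌊μ⌋ + 1 := by have := hz a; omega
      rw [hcast]; exact_mod_cast this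
    rcases hcase with h | h
    · simp [h]
    · rw [h, show s * ((⌊μ⌋ : ℝ) + 1 - μ) = s * (⌊μ⌋ - μ) + s by ring, Real.exp_add]
      ring
  have hsum : ∑ a, w a * Real.exp (s * (z a - μ)) =
      Real.exp (s * (⌊μ⌋ - μ)) * (1 + (μ - ⌊μ⌋) * (Real.exp s - 1)) := by
    have : ∀ a, w a * Real.exp (s * (z a - μ)) = Real.exp (s * (⌊μ⌋ - μ)) *
        (w a * (1 - ⌊μ⌋ * (Real.exp s - 1)) + w a * z a * (Real.exp s - 1)) := fun a => by
      rw [hterm]; ring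
    rw [sum_congr rfl fun a _ => this a, ← mul_sum, sum_add_distrib, ← sum_mul, ← sum_mul, hw1, hE]
    ring
  have hfl : (0 : ℝ) ≤ ⌊μ⌋ := by exact_mod_cast Int.floor_nonneg.2 hμ
  calc _ ≤ Real.exp (s * (⌊μ⌋ - μ)) * Real.exp ((μ - ⌊μ⌋) * (Real.exp s - 1)) := by
        rw [hsum]
        gcongr
        linarith [Real.add_one_le_exp ((μ - ⌊μ⌋) * (Real.exp s - 1))]
    _ = Real.exp ((μ - ⌊μ⌋) * (Real.exp s - 1 - s)) := by
        rw [← Real.exp_add]; ring_nf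
    _ ≤ _ := by
        gcongr
        · linarith [Real.add_one_le_exp s]
        · linarith

/-- Exponential Markov inequality for a sum of independent coordinates. -/
lemma product_tail_le {D Ω : Type*} [Fintype D] [Fintype Ω] {w : Ω → ℝ} (hw : ∀ a, 0 ≤ w a)
    (X : D → Ω → ℝ) (μ : D → ℝ) (c b : ℝ)
    (hX : ∀ i, ∑ a, w a * Real.exp (X i a) ≤ Real.exp (μ i * c)) :
    ∑ a : D → Ω with b ≤ ∑ i, X i (a i), ∏ i, w (a i) ≤ Real.exp ((∑ i, μ i) * c - b) := by
  calc ∑ a : D → Ω with b ≤ ∑ i, X i (a i), ∏ i, w (a i)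
      ≤ ∑ a : D → Ω with b ≤ ∑ i, X i (a i),
          (∏ i, w (a i)) * Real.exp (∑ i, X i (a i) - b) := by
        refine sum_le_sum fun a ha => le_mul_of_one_le_right (prod_nonneg fun i _ => hw _) ?_
        exact Real.one_le_exp (sub_nonneg.2 (mem_filter.1 ha).2)
    _ ≤ ∑ a : D → Ω, (∏ i, w (a i)) * Real.exp (∑ i, X i (a i) - b) :=
        sum_le_sum_of_subset_of_nonneg (filter_subset _ _) fun a _ _ =>
          mul_nonneg (prod_nonneg fun i _ => hw _) (Real.exp_pos _).le
    _ = (∏ i, ∑ a, w a * Real.exp (X i a)) * Real.exp (-b) := by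
        rw [Fintype.prod_sum, sum_mul]
        refine sum_congr rfl fun a _ => ?_
        rw [sub_eq_add_neg, Real.exp_add, Real.exp_sum, prod_mul_distrib, mul_assoc]
    _ ≤ (∏ i, Real.exp (μ i * c)) * Real.exp (-b) := by
        gcongr with i
        · exact fun i _ => sum_nonneg fun a _ => mul_nonneg (hw a) (Real.exp_pos _).le
        · exact hX i
    _ = _ := by
        rw [← Real.exp_sum, ← Real.exp_add, ← sum_mul, sub_eq_add_neg]

lemma sum_prod_mul_coordinate {D Ω : Type*} [Fintype D] [Fintype Ω] {w : Ω → ℝ}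
    (hw1 : ∑ a, w a = 1) (g : Ω → ℝ) (i : D) :
    ∑ a : D → Ω, (∏ i', w (a i')) * g (a i) = ∑ a, w a * g a := by
  have h : ∀ a : D → Ω, (∏ i', w (a i')) * g (a i) =
      ∏ i', (w (a i') * if i' = i then g (a i') else 1) := fun a => by
    rw [prod_mul_distrib, prod_ite_eq' univ i (fun i' => g (a i'))]
    simp
  rw [sum_congr rfl fun a _ => h a,
    ← Fintype.prod_sum (fun i' (x : Ω) => w x * if i' = i then g x else 1),
    prod_eq_single i]
  · simp
  · intro i' _ hi'
    simp [hi', hw1]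
  · simp

/-- Chernoff bounds for a sum of independent coordinates, each taking only the two integer values
around its mean. -/
lemma product_chernoff {D Ω : Type*} [Fintype D] [Fintype Ω] {w : Ω → ℝ} (hw : ∀ a, 0 ≤ w a)
    (hw1 : ∑ a, w a = 1) {z : D → Ω → ℕ} {μ : D → ℝ} (hμ : ∀ i, 0 ≤ μ i)
    (hE : ∀ i, ∑ a, w a * (z i a : ℝ) = μ i)
    (hz : ∀ i a, (z i a : ℤ) = ⌊μ i⌋ ∨ (z i a : ℤ) = ⌈μ i⌉) {x : ℝ} (hx : ∑ i, μ i = x)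
    (hx0 : 0 < x) {b : ℝ} (hb : 0 < b) :
    (b ≤ x → ∑ a : D → Ω with b ≤ ((∑ i, z i (a i) : ℕ) : ℝ) - x, ∏ i, w (a i) ≤
      Real.exp (-(b ^ 2 / (3 * x)))) ∧
    ∑ a : D → Ω with ((∑ i, z i (a i) : ℕ) : ℝ) - x ≤ -b, ∏ i, w (a i) ≤
      Real.exp (-(b ^ 2 / (2 * x))) := by
  have key : ∀ s c : ℝ, ∑ a : D → Ω with s * c ≤ s * (((∑ i, z i (a i) : ℕ) : ℝ) - x),
      ∏ i, w (a i) ≤ Real.exp (x * (Real.exp s - 1 - s) - s * c) := fun s c => by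
    have h := product_tail_le hw (fun i a => s * (z i a - μ i)) μ (Real.exp s - 1 - s) (s * c)
      fun i => weighted_sum_exp_le hw1 (hμ i) (hE i) (hz i) s
    simpa [← mul_sum, hx] using h
  have hδ : 0 < b / x := div_pos hb hx0
  constructor
  · intro hbx
    have hδ1 : b / x ≤ 1 := (div_le_one hx0).2 hbx
    have hs : 0 < 2 / 3 * (b / x) := by positivity
    have h := key (2 / 3 * (b / x)) b
    simp only [mul_le_mul_iff_right₀ hs] at h
    refine h.trans (Real.exp_le_exp.2 ?_)
    calc _ ≤ x * (3 / 4 * (2 / 3 * (b / x)) ^ 2) - 2 / 3 * (b / x) * b := by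
          gcongr
          exact exp_sub_one_sub_le (abs_le.2 ⟨by linarith, by linarith⟩)
      _ = _ := by field_simp; ring
  · have h := key (-(b / x)) (-b)
    simp only [mul_le_mul_left_of_neg (neg_lt_zero.2 hδ)] at h
    refine h.trans (Real.exp_le_exp.2 ?_)
    calc _ ≤ x * ((b / x) ^ 2 / 2) - -(b / x) * -b := by
          gcongr
          linarith [exp_neg_le_quadratic hδ.le]
      _ = _ := by field_simp; ring

/-- For every reservation problem over a finite horizon T there
exists a finitely supported lottery over monotone sequences of reservation
tables that is unbiased, stays within department quota almost surely, and
approximately stays within university quota, with Chernoff-type tail bounds on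
the deviation of each university-level column total from its fair share. -/
theorem lottery_approximately_within_university_quota
    (D C : Type) [Fintype D] [Fintype C]
    (hD : 2 ≤ Fintype.card D) (hC : 2 ≤ Fintype.card C)
    (α : C → ℝ) (hα0 : ∀ j, 0 < α j) (hα1 : ∀ j, α j < 1)
    (hαsum : ∑ j, α j = 1)
    (T : ℕ) (q : Fin T → D → ℕ) :
    ∃ (N : ℕ) (p : Fin N → ℝ) (Z : Fin N → Fin T → D → C → ℕ),
      (∀ a, 0 ≤ p a) ∧ (∑ a, p a = 1) ∧
      (∀ a t i, ∑ j, Z a t i j = cumQ q t i) ∧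
      (∀ a (t t' : Fin T), t ≤ t' → ∀ i j, Z a t i j ≤ Z a t' i j) ∧
      (∀ a, p a ≠ 0 → ∀ t i j,
        ((Z a t i j : ℕ) : ℤ) = ⌊α j * ((cumQ q t i : ℕ) : ℝ)⌋ ∨
        ((Z a t i j : ℕ) : ℤ) = ⌈α j * ((cumQ q t i : ℕ) : ℝ)⌉) ∧
      (∀ t i j, ∑ a, p a * ((Z a t i j : ℕ) : ℝ) = α j * ((cumQ q t i : ℕ) : ℝ)) ∧
      (∀ (t : Fin T) (j : C),
        0 < α j * ((∑ i, cumQ q t i : ℕ) : ℝ) →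
          ((∀ b : ℝ, 0 < b → b ≤ α j * ((∑ i, cumQ q t i : ℕ) : ℝ) →
            ∑ a ∈ Finset.univ.filter (fun a : Fin N =>
                b ≤ ((∑ i, Z a t i j : ℕ) : ℝ) - α j * ((∑ i, cumQ q t i : ℕ) : ℝ)), p a
              ≤ Real.exp (-(b ^ 2 / (3 * (α j * ((∑ i, cumQ q t i : ℕ) : ℝ)))))) ∧
          (∀ b : ℝ, 0 < b →
            ∑ a ∈ Finset.univ.filter (fun a : Fin N =>
                ((∑ i, Z a t i j : ℕ) : ℝ) - α j * ((∑ i, cumQ q t i : ℕ) : ℝ) ≤ -b), p a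
              ≤ Real.exp (-(b ^ 2 / (2 * (α j * ((∑ i, cumQ q t i : ℕ) : ℝ)))))))) := by
  obtain ⟨Ω, _, w, z, hw, hw1, hmono, hrow, hE, hquota⟩ :=
    exists_single_department_lottery α (fun j => (hα0 j).le) hαsum (∑ t, ∑ i, cumQ q t i)
  have hK : ∀ t i, cumQ q t i ≤ ∑ t, ∑ i, cumQ q t i := fun t i =>
    (single_le_sum (f := fun i => cumQ q t i) (fun _ _ => Nat.zero_le _) (mem_univ i)).trans
      (single_le_sum (f := fun t => ∑ i, cumQ q t i) (fun _ _ => Nat.zero_le _) (mem_univ t))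
  have hcum : ∀ (t t' : Fin T), t ≤ t' → ∀ i, cumQ q t i ≤ cumQ q t' i := fun t t' h i =>
    sum_le_sum_of_subset fun s hs => by
      simp only [mem_filter] at hs ⊢
      exact ⟨hs.1, hs.2.trans h⟩
  let e := (Fintype.equivFin (D → Ω)).symm
  have hsum : ∀ g : (D → Ω) → ℝ, ∑ a, g (e a) = ∑ a, g a := fun g => e.sum_comp g
  have hfilter : ∀ (P : (D → Ω) → Prop) (g : (D → Ω) → ℝ),
      ∑ a with P (e a), g (e a) = ∑ a with P a, g a := fun P g => by
    rw [sum_filter, sum_filter]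
    exact hsum fun a => if P a then g a else 0
  refine ⟨_, fun a => ∏ i, w (e a i), fun a t i j => z (e a i) (cumQ q t i) j,
    fun a => prod_nonneg fun i _ => (hw _).le, ?_, fun a t i => hrow _ _ (hK t i),
    fun a t t' h i j => hmono _ _ (hcum t t' h i), fun a _ t i j => hquota _ _ (hK t i) j,
    fun t i j => ?_, fun t j hx => ?_⟩
  · rw [hsum fun a => ∏ i, w (a i), ← Fintype.prod_sum fun (_ : D) a => w a]
    simp [hw1]
  · rw [hsum fun a => (∏ i, w (a i)) * (z (a i) (cumQ q t i) j : ℝ),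
      sum_prod_mul_coordinate hw1 (fun a => (z a (cumQ q t i) j : ℝ)) i]
    exact hE _ (hK t i) j
  · have hchernoff := fun b (hb : 0 < b) => product_chernoff (fun a => (hw a).le) hw1
      (z := fun i a => z a (cumQ q t i) j) (μ := fun i => α j * (cumQ q t i : ℝ))
      (fun i => mul_nonneg (hα0 j).le (Nat.cast_nonneg _)) (fun i => hE _ (hK t i) j)
      (fun i a => hquota a _ (hK t i) j) (by push_cast; rw [mul_sum]) hx hb
    refine ⟨fun b hb hbx => ?_, fun b hb => ?_⟩
    · rw [hfilter (fun a => b ≤ ((∑ i, z (a i) (cumQ q t i) j : ℕ) : ℝ) -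
        α j * ((∑ i, cumQ q t i : ℕ) : ℝ)) (fun a => ∏ i, w (a i))]
      exact (hchernoff b hb).1 hbx
    · rw [hfilter (fun a => ((∑ i, z (a i) (cumQ q t i) j : ℕ) : ℝ) -
        α j * ((∑ i, cumQ q t i : ℕ) : ℝ) ≤ -b) (fun a => ∏ i, w (a i))]
      exact (hchernoff b hb).2
end

section
/- Let m ∈ ℕ with m ≥ 1, let α ∈ (0,1), and let λ satisfy α < λ < 1, λ ≥ 1/2 and λ·m ∈ ℕ. Then the upper tail of the binomial distribution satisfies B_α(m, λ) := ∑_{c = λm}^{m} C(m,c)·α^c·(1−α)^{m−c} ≥ (1/√(2m))·exp(−m·H(λ; α)), where H(λ; α) = λ·ln(λ/α) + (1−λ)·ln((1−λ)/(1−α)). -/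
open Finset

open Stirling in
/-- The successive decrements of `log ∘ stirlingSeq` are antitone. -/
lemma antitone_log_stirlingSeq_diff :
    Antitone fun n : ℕ =>
      Real.log (stirlingSeq (n + 1)) - Real.log (stirlingSeq (n + 2)) := by
  intro n k hnk
  refine hasSum_le (fun j => ?_) (log_stirlingSeq_sdiff_hasSum k)
    (log_stirlingSeq_sdiff_hasSum n)
  have : (n : ℝ) ≤ k := by exact_mod_cast hnk
  push_cast
  gcongr

open Stirling in
lemma log_stirlingSeq_add_le (a b : ℕ) :
    Real.log (stirlingSeq (a + 1)) + Real.log (stirlingSeq (b + 1)) ≤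
      Real.log 2 + Real.log (stirlingSeq (a + b + 2)) := by
  induction a with
  | zero =>
    induction b with
    | zero =>
      have h1 : (stirlingSeq 1) * (stirlingSeq 1) = 2 * stirlingSeq 2 := by
        have h2 : (√2 : ℝ) ^ 2 = 2 := Real.sq_sqrt (by norm_num)
        have h4 : √(2 * 2 : ℝ) = 2 := by
          rw [Real.sqrt_mul_self (by norm_num)]
        simp only [stirlingSeq, Nat.factorial, Nat.cast_ofNat, Nat.cast_one, h4]
        norm_num
        have := Real.exp_pos 1
        field_simp
        linarith
      have p1 : 0 < stirlingSeq 1 := stirlingSeq'_pos 0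
      have p2 : 0 < stirlingSeq 2 := stirlingSeq'_pos 1
      simp only [zero_add]
      rw [← Real.log_mul p1.ne' p1.ne', h1, Real.log_mul (by norm_num) p2.ne']
    | succ b ih =>
      have h := antitone_log_stirlingSeq_diff (show b ≤ b + 1 by omega)
      simp only [zero_add, add_assoc, Nat.reduceAdd] at h ih ⊢
      linarith
  | succ a ih =>
    have h := antitone_log_stirlingSeq_diff (show a ≤ a + b + 1 by omega)
    simp only at h
    rw [show a + b + 1 + 1 = a + b + 2 by omega] at h
    rw [show a + 1 + b + 2 = a + b + 1 + 2 by omega]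
    rw [show a + 1 + 1 = a + 2 by omega]
    linarith

open Stirling in
lemma stirlingSeq_mul_le {a b : ℕ} (ha : 0 < a) (hb : 0 < b) :
    stirlingSeq a * stirlingSeq b ≤ 2 * stirlingSeq (a + b) := by
  obtain ⟨a, rfl⟩ := Nat.exists_eq_succ_of_ne_zero ha.ne'
  obtain ⟨b, rfl⟩ := Nat.exists_eq_succ_of_ne_zero hb.ne'
  have h := log_stirlingSeq_add_le a b
  have pa := stirlingSeq'_pos a
  have pb := stirlingSeq'_pos b
  have pab := stirlingSeq'_pos (a + b + 1)
  rw [← Real.log_mul pa.ne' pb.ne', ← Real.log_mul (by norm_num) pab.ne'] at h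
  rw [show a.succ + b.succ = a + b + 2 by omega]
  exact (Real.log_le_log_iff (by positivity) (by positivity)).1 h

open Stirling in
lemma factorial_eq_stirlingSeq_mul {n : ℕ} (hn : 0 < n) :
    (n.factorial : ℝ) * Real.exp 1 ^ n = stirlingSeq n * √(2 * n) * (n : ℝ) ^ n := by
  have : (0 : ℝ) < n := by exact_mod_cast hn
  have := Real.exp_pos 1
  rw [stirlingSeq, div_pow]
  field_simp

open Stirling in
/-- The mode of the binomial distribution with parameters `a + b` and `a / (a + b)` has
probability at least `1 / √(2 (a + b))`. -/
lemma pow_add_le_choose_mul_sqrt {a b : ℕ} (ha : 0 < a) (hb : 0 < b) :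
    ((a + b : ℕ) : ℝ) ^ (a + b) ≤
      ((a + b).choose a : ℝ) * (a : ℝ) ^ a * (b : ℝ) ^ b * √(2 * (a + b : ℕ)) := by
  have ha' : (0 : ℝ) < a := by exact_mod_cast ha
  have hb' : (0 : ℝ) < b := by exact_mod_cast hb
  have hs := stirlingSeq_mul_le ha hb
  have pa : 0 < stirlingSeq a := by
    simpa [Nat.sub_add_cancel ha] using stirlingSeq'_pos (a - 1)
  have pb : 0 < stirlingSeq b := by
    simpa [Nat.sub_add_cancel hb] using stirlingSeq'_pos (b - 1)
  have hc : ((a + b).choose a : ℝ) * a.factorial * b.factorial = (a + b).factorial := by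
    rw [Nat.choose_symm_add]
    exact_mod_cast Nat.add_choose_mul_factorial_mul_factorial a b
  have fa := factorial_eq_stirlingSeq_mul ha
  have fb := factorial_eq_stirlingSeq_mul hb
  have fab := factorial_eq_stirlingSeq_mul (Nat.add_pos_left ha b)
  have hsq : √(2 * a : ℝ) * √(2 * b) ≤ (a + b : ℕ) := by
    rw [← Real.sqrt_mul (by positivity)]
    refine Real.sqrt_le_iff.2 ⟨by positivity, ?_⟩
    push_cast
    nlinarith [sq_nonneg ((a : ℝ) - b)]
  have hr : √(2 * (a + b : ℕ) : ℝ) ^ 2 = 2 * (a + b : ℕ) := Real.sq_sqrt (by positivity)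
  have hrpos : 0 < √(2 * (a + b : ℕ) : ℝ) := Real.sqrt_pos.2 (by positivity)
  set C : ℝ := ((a + b).choose a : ℝ)
  set r := √(2 * (a + b : ℕ) : ℝ)
  set M : ℝ := ((a + b : ℕ) : ℝ)
  set A : ℝ := (a : ℝ) ^ a
  set B : ℝ := (b : ℝ) ^ b
  have hC : 0 ≤ C * A * B := by positivity
  have key : stirlingSeq (a + b) * r * M ^ (a + b) =
      C * A * B * (stirlingSeq a * stirlingSeq b) * (√(2 * a : ℝ) * √(2 * b)) := by
    rw [← fab, ← hc, pow_add]
    linear_combination C * (b.factorial * Real.exp 1 ^ b) * fa +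
      C * (stirlingSeq a * √(2 * a) * A) * fb
  have hpos : 0 < stirlingSeq a * stirlingSeq b * r := by positivity
  refine le_of_mul_le_mul_left ?_ hpos
  calc stirlingSeq a * stirlingSeq b * r * M ^ (a + b)
      ≤ 2 * stirlingSeq (a + b) * r * M ^ (a + b) := by gcongr
    _ = 2 * (C * A * B * (stirlingSeq a * stirlingSeq b) * (√(2 * a : ℝ) * √(2 * b))) := by
      rw [← key]; ring
    _ ≤ 2 * (C * A * B * (stirlingSeq a * stirlingSeq b) * M) := by gcongr
    _ = stirlingSeq a * stirlingSeq b * r * (C * A * B * r) := by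
      linear_combination (-(C * A * B * (stirlingSeq a * stirlingSeq b))) * hr

/-- Ahle's lower bound on the upper tail of the binomial
distribution: for λ ≥ 1/2 with α < λ < 1 and λ·m ∈ ℕ,
B_α(m, λ) ≥ (1/√(2m))·exp(−m·H(λ; α)), where H is the Bernoulli
Kullback–Leibler divergence. -/
theorem binomial_tail_lower_bound
    (m : ℕ) (hm : 1 ≤ m) (α lam : ℝ)
    (hα0 : 0 < α) (hα1 : α < 1)
    (hαlam : α < lam) (hlam1 : lam < 1) (hlamhalf : 1 / 2 ≤ lam)
    (l : ℕ) (hl : (l : ℝ) = lam * m) :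
    (1 / Real.sqrt (2 * m)) *
        Real.exp (-(m : ℝ) *
          (lam * Real.log (lam / α) + (1 - lam) * Real.log ((1 - lam) / (1 - α))))
      ≤ ∑ c ∈ Finset.Icc l m, (m.choose c : ℝ) * α ^ c * (1 - α) ^ (m - c) := by
  have hm0 : (0 : ℝ) < m := by exact_mod_cast hm
  have hlam0 : 0 < lam := hα0.trans hαlam
  have hl0 : 0 < l := by
    have : (0 : ℝ) < l := hl ▸ mul_pos hlam0 hm0
    exact_mod_cast this
  have hlm : l < m := by
    have : (l : ℝ) < m := by rw [hl]; nlinarith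
    exact_mod_cast this
  obtain ⟨b, rfl⟩ := Nat.exists_eq_add_of_le hlm.le
  have hb0 : 0 < b := by omega
  have hα : 0 < 1 - α := sub_pos.2 hα1
  have hlam : 0 < 1 - lam := sub_pos.2 hlam1
  have hb : (b : ℝ) = (1 - lam) * (l + b : ℕ) := by
    rw [sub_mul, ← hl]; push_cast; ring
  have hexp : Real.exp (-((l + b : ℕ) : ℝ) *
      (lam * Real.log (lam / α) + (1 - lam) * Real.log ((1 - lam) / (1 - α)))) =
      (α / lam) ^ l * ((1 - α) / (1 - lam)) ^ b := by
    rw [← Real.exp_log (show 0 < (α / lam) ^ l * ((1 - α) / (1 - lam)) ^ b by positivity),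
      Real.log_mul (by positivity) (by positivity), Real.log_pow, Real.log_pow,
      ← inv_div lam α, ← inv_div (1 - lam) (1 - α), Real.log_inv, Real.log_inv]
    congr 1
    linear_combination Real.log (lam / α) * hl + Real.log ((1 - lam) / (1 - α)) * hb
  have hmode : 1 ≤ ((l + b).choose l : ℝ) * lam ^ l * (1 - lam) ^ b * √(2 * (l + b : ℕ)) := by
    have h := pow_add_le_choose_mul_sqrt hl0 hb0
    rw [hl, hb, mul_pow, mul_pow] at h
    refine le_of_mul_le_mul_left ?_ (pow_pos hm0 (l + b))
    rw [mul_one]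
    refine h.trans_eq ?_
    rw [pow_add]
    ring
  refine le_trans ?_ (Finset.single_le_sum
    (f := fun c => ((l + b).choose c : ℝ) * α ^ c * (1 - α) ^ (l + b - c))
    (fun c _ => by positivity) (Finset.mem_Icc.2 ⟨le_rfl, hlm.le⟩))
  have hr : 0 < √(2 * (l + b : ℕ) : ℝ) := Real.sqrt_pos.2 (by positivity)
  simp only [Nat.add_sub_cancel_left]
  rw [hexp, div_mul_eq_mul_div, one_mul, div_le_iff₀ hr, div_pow, div_pow, div_mul_div_comm,
    div_le_iff₀ (by positivity)]
  calc α ^ l * (1 - α) ^ b = α ^ l * (1 - α) ^ b * 1 := (mul_one _).symm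
    _ ≤ α ^ l * (1 - α) ^ b *
        (((l + b).choose l : ℝ) * lam ^ l * (1 - lam) ^ b * √(2 * (l + b : ℕ))) := by gcongr
    _ = _ := by ring
end

section
/- Let α ∈ (0,1) and ε > 0 be such that (1+ε)·α < 1. Then (1/α)·H((1+ε)α; α) ≤ ε²·( 1 + 1/ε + (1−(1+ε)α)/((1−α)·ε) ), where H(λ; α) = λ·ln(λ/α) + (1−λ)·ln((1−λ)/(1−α)). -/
/-- Key estimate for tightness of the Chernoff-type bounds:
(1/α)·H((1+ε)α; α) ≤ ε²·(1 + 1/ε + (1−(1+ε)α)/((1−α)·ε)), where H(λ; α) is the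
Kullback–Leibler divergence between Bernoulli(λ) and Bernoulli(α). -/
theorem kl_divergence_estimate
    (α ε : ℝ) (hα0 : 0 < α) (hα1 : α < 1) (hε : 0 < ε)
    (h : (1 + ε) * α < 1) :
    (1 / α) * ((1 + ε) * α * Real.log ((1 + ε) * α / α)
        + (1 - (1 + ε) * α) * Real.log ((1 - (1 + ε) * α) / (1 - α)))
      ≤ ε ^ 2 * (1 + 1 / ε + (1 - (1 + ε) * α) / ((1 - α) * ε)) := by
  have hβ : 0 < 1 - (1 + ε) * α := by linarith
  have hγ : 0 < 1 - α := by linarith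
  have hlog_accept : Real.log ((1 + ε) * α / α) ≤ ε := by
    rw [mul_div_cancel_right₀ _ hα0.ne']
    linarith [Real.log_le_sub_one_of_pos (show 0 < 1 + ε by linarith)]
  have hlog_reject : Real.log ((1 - (1 + ε) * α) / (1 - α)) ≤ 0 := by
    refine Real.log_nonpos (by positivity) ((div_le_one hγ).2 ?_)
    nlinarith [mul_pos hε hα0]
  calc
    _ ≤ (1 / α) * ((1 + ε) * α * ε + 0) := by
      gcongr
      exact mul_nonpos_of_nonneg_of_nonpos hβ.le hlog_reject
    _ = ε ^ 2 * (1 + 1 / ε + 0) := by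
      field_simp
      ring
    _ ≤ _ := by
      gcongr
      positivity
end
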